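/- arXiv:2408.03973 — 13 statements merged into one kernel-verified Lean document; each statement's English description precedes it below -/
import Mathlib

section
/- Let ψ ∈ 𝒟₁ (so ψ is concave, strictly increasing, differentiable, unbounded on (0,∞)), and let {c_n} be a non-negative non-increasing real sequence tending to zero such that liminf_{n→∞} ψ(n)·c_n > 0. If A ⊆ ℕ is an infinite set such that the sub-series Σ_{n=1}^∞ χ_A(n)·c_n converges, then the asymptotic ψ-density of A is zero, i.e. lim_{n→∞} A_ψ(n)/ψ(n) = 0. -/
open Filter

/-- The class 𝒟 of strictly increasing, differentiable, unbounded functions on (0,∞). -/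
def memD (ψ : ℝ → ℝ) : Prop :=
  StrictMonoOn ψ (Set.Ioi 0) ∧ (∀ x ∈ Set.Ioi (0:ℝ), 0 < ψ x) ∧
    (∀ x ∈ Set.Ioi (0:ℝ), DifferentiableAt ℝ ψ x) ∧ Tendsto ψ atTop atTop

/-- The class 𝒟₁ of concave functions in 𝒟. -/
def memD1 (ψ : ℝ → ℝ) : Prop := memD ψ ∧ ConcaveOn ℝ (Set.Ioi 0) ψ

/-- The class 𝒟₂ of convex functions in 𝒟 with ψ(n+1)/ψ(n) → 1. -/
def memD2 (ψ : ℝ → ℝ) : Prop :=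
  memD ψ ∧ ConvexOn ℝ (Set.Ioi 0) ψ ∧
    Tendsto (fun n : ℕ => ψ (n + 1) / ψ n) atTop (nhds 1)

/-- A_ψ(n) = ∑_{k=1}^n ψ'(k) · χ_A(k). -/
noncomputable def Apsi (ψ : ℝ → ℝ) (A : Set ℕ) (n : ℕ) : ℝ :=
  ∑ k ∈ Finset.Icc 1 n, deriv ψ (k : ℝ) * A.indicator (fun _ => (1 : ℝ)) k

/-- ∑_{k=1}^n ψ'(k). -/
noncomputable def Spsi (ψ : ℝ → ℝ) (n : ℕ) : ℝ :=
  ∑ k ∈ Finset.Icc 1 n, deriv ψ (k : ℝ)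

/-- ψ ∈ 𝒟₁, c nonneg non-increasing → 0 with liminf ψ(n)c_n > 0;
if Σ χ_A(n) c_n converges then the asymptotic ψ-density of A is 0. -/
theorem stmt0 (ψ : ℝ → ℝ) (hψ : memD1 ψ) (c : ℕ → ℝ)
    (hc_nonneg : ∀ n : ℕ, 1 ≤ n → 0 ≤ c n)
    (hc_mono : ∀ n : ℕ, 1 ≤ n → c (n + 1) ≤ c n)
    (hc_zero : Tendsto c atTop (nhds 0))
    (hliminf : ∃ δ > (0:ℝ), ∀ᶠ n : ℕ in atTop, δ ≤ ψ n * c n)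
    (A : Set ℕ) (hA : A.Infinite)
    (hconv : Summable (fun n => A.indicator c n)) :
    Tendsto (fun n : ℕ => Apsi ψ A n / ψ n) atTop (nhds 0) := by
  obtain ⟨⟨hmono, hpos, hdiff, htop⟩, hconc⟩ := hψ
  obtain ⟨δ, hδ, hev⟩ := hliminf
  have hanti : AntitoneOn (deriv ψ) (Set.Ioi 0) := hconc.antitoneOn_deriv hdiff
  have hkpos : ∀ k : ℕ, 1 ≤ k → (k : ℝ) ∈ Set.Ioi (0 : ℝ) := fun k hk => by
    have : (0 : ℝ) < k := by exact_mod_cast hk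
    exact this
  have hd0 : ∀ k : ℕ, 1 ≤ k → 0 ≤ deriv ψ k := fun k hk => by
    have h1 : 0 ≤ derivWithin ψ (Set.Ioi 0) (k : ℝ) := hmono.monotoneOn.derivWithin_nonneg
    rwa [derivWithin_of_isOpen isOpen_Ioi (hkpos k hk)] at h1
  have hd1 : ∀ k : ℕ, 1 ≤ k → deriv ψ k ≤ deriv ψ 1 := fun k hk =>
    hanti (Set.mem_Ioi.2 one_pos) (hkpos k hk) (by exact_mod_cast hk)
  have hd10 : 0 ≤ deriv ψ 1 := by simpa using hd0 1 le_rfl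
  set b : ℕ → ℝ := fun k => deriv ψ 1 * A.indicator (fun k : ℕ => |(ψ k)⁻¹|) k with hb
  have hb0 : ∀ k, 0 ≤ b k := fun k =>
    mul_nonneg hd10 (Set.indicator_nonneg (fun _ _ => abs_nonneg _) _)
  have hbs : Summable b := by
    refine Summable.mul_left _ ?_
    refine Summable.of_norm_bounded_eventually_nat (hconv.mul_left δ⁻¹) ?_
    filter_upwards [hev, eventually_ge_atTop 1] with k hk hk1
    have hp := hpos _ (hkpos k hk1)
    by_cases hkA : k ∈ A
    · simp only [Set.indicator_of_mem hkA, Real.norm_eq_abs, abs_abs]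
      rw [abs_of_pos (inv_pos.2 hp), inv_mul_eq_div, le_div_iff₀ hδ, inv_mul_le_iff₀ hp]
      exact hk
    · simp [Set.indicator_of_notMem hkA]
  set F : ℕ → ℕ → ℝ := fun n k => if k ∈ Finset.Icc 1 n then
    deriv ψ (k : ℝ) * A.indicator (fun _ => (1 : ℝ)) k / ψ n else 0 with hF
  have hFs : ∀ n, Apsi ψ A n / ψ n = ∑' k, F n k := fun n => by
    rw [tsum_eq_sum (s := Finset.Icc 1 n) (fun k hk => if_neg hk), Apsi, Finset.sum_div]
    exact Finset.sum_congr rfl fun k hk => (if_pos hk).symm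
  simp_rw [hFs]
  have hnat : Tendsto (fun n : ℕ => ψ n) atTop atTop := htop.comp tendsto_natCast_atTop_atTop
  have key : Tendsto (fun n => ∑' k, F n k) atTop (nhds (∑' _ : ℕ, (0 : ℝ))) := by
    refine tendsto_tsum_of_dominated_convergence hbs (fun k => ?_) (Eventually.of_forall ?_)
    · by_cases hk : 1 ≤ k
      · refine (hnat.const_div_atTop
          (deriv ψ (k : ℝ) * A.indicator (fun _ => (1 : ℝ)) k)).congr' ?_
        filter_upwards [eventually_ge_atTop k] with n hn
        exact (if_pos (Finset.mem_Icc.2 ⟨hk, hn⟩)).symm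
      · refine tendsto_const_nhds.congr fun n => (if_neg ?_).symm
        exact fun h => hk (Finset.mem_Icc.1 h).1
    · intro n k
      by_cases hk : k ∈ Finset.Icc 1 n
      · obtain ⟨h1, h2⟩ := Finset.mem_Icc.1 hk
        simp only [hF, if_pos hk]
        by_cases hkA : k ∈ A
        · simp only [hb, Set.indicator_of_mem hkA, mul_one]
          have hp := hpos _ (hkpos k h1)
          have hle : ψ k ≤ ψ n := hmono.monotoneOn (hkpos k h1) (hkpos n (h1.trans h2))
            (by exact_mod_cast h2)
          rw [Real.norm_of_nonneg (div_nonneg (hd0 k h1) (hp.le.trans hle)),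
            abs_of_pos (inv_pos.2 hp), ← div_eq_mul_inv]
          exact div_le_div₀ hd10 (hd1 k h1) hp hle
        · simp [hb, Set.indicator_of_notMem hkA]
      · simp only [hF, if_neg hk, norm_zero]
        exact hb0 k
  simpa using key
end

section
/- Let ψ ∈ 𝒟₂ (so ψ is convex, strictly increasing, differentiable, unbounded on (0,∞), with ψ(n+1)/ψ(n) → 1 as n → ∞), and let {c_n} be a non-negative non-increasing real sequence tending to zero such that liminf_{n→∞} (ψ(n)/ψ'(n))·c_n > 0. If A ⊆ ℕ is an infinite set such that the sub-series Σ_{n=1}^∞ χ_A(n)·c_n converges, then the asymptotic ψ-density of A is zero, i.e. lim_{n→∞} A_ψ(n)/ψ(n) = 0. -/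
open Filter

/-- ψ ∈ 𝒟₂, c nonneg non-increasing → 0 with liminf (ψ(n)/ψ'(n))c_n > 0;
if Σ χ_A(n) c_n converges then the asymptotic ψ-density of A is 0. -/
theorem stmt1 (ψ : ℝ → ℝ) (hψ : memD2 ψ) (c : ℕ → ℝ)
    (hc_nonneg : ∀ n : ℕ, 1 ≤ n → 0 ≤ c n)
    (hc_mono : ∀ n : ℕ, 1 ≤ n → c (n + 1) ≤ c n)
    (hc_zero : Tendsto c atTop (nhds 0))
    (hliminf : ∃ δ > (0:ℝ), ∀ᶠ n : ℕ in atTop, δ ≤ ψ n / deriv ψ n * c n)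
    (A : Set ℕ) (hA : A.Infinite)
    (hconv : Summable (fun n => A.indicator c n)) :
    Tendsto (fun n : ℕ => Apsi ψ A n / ψ n) atTop (nhds 0) := by
  obtain ⟨⟨hmono, hpos, hdiff, htop⟩, -, -⟩ := hψ
  obtain ⟨δ, hδ, hev⟩ := hliminf
  have hd : ∀ x : ℝ, 0 < x → 0 ≤ deriv ψ x := by
    intro x hx
    have h := hmono.monotoneOn.derivWithin_nonneg (x := x)
    rwa [derivWithin_of_isOpen isOpen_Ioi hx] at h
  set a : ℕ → ℝ := fun k => deriv ψ (k : ℝ) * A.indicator (fun _ => (1 : ℝ)) k with ha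
  have hχ : ∀ k, 0 ≤ A.indicator (fun _ => (1 : ℝ)) k := fun k =>
    Set.indicator_nonneg (fun _ _ => zero_le_one) k
  have hpn : ∀ k : ℕ, 1 ≤ k → 0 < ψ k := fun k hk =>
    hpos _ (Set.mem_Ioi.2 (by exact_mod_cast hk))
  have ha0 : ∀ k : ℕ, 1 ≤ k → 0 ≤ a k := fun k hk =>
    mul_nonneg (hd _ (by exact_mod_cast hk)) (hχ k)
  have hg : Summable (fun k : ℕ => |a k / ψ k|) := by
    refine Summable.of_norm_bounded_eventually_nat (hconv.mul_left (1 / δ)) ?_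
    filter_upwards [hev, eventually_ge_atTop 1] with k hk h1
    have hp := hpn k h1
    have hdk : 0 < deriv ψ (k : ℝ) := by
      rcases (hd (k : ℝ) (by exact_mod_cast h1)).lt_or_eq with h | h
      · exact h
      · rw [← h] at hk
        simp at hk
        linarith
    have hk2 : deriv ψ (k : ℝ) / ψ k ≤ 1 / δ * c k := by
      rw [div_mul_eq_mul_div, le_div_iff₀ hdk] at hk
      rw [div_le_iff₀ hp, div_mul_eq_mul_div, div_mul_eq_mul_div, le_div_iff₀ hδ]
      linarith
    rw [Real.norm_eq_abs, abs_abs, abs_of_nonneg (div_nonneg (ha0 k h1) hp.le)]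
    by_cases hkA : k ∈ A
    · simpa [ha, hkA] using hk2
    · simp [ha, hkA]
  have hψn : Tendsto (fun n : ℕ => ψ (n : ℝ)) atTop atTop :=
    htop.comp tendsto_natCast_atTop_atTop
  have key : Tendsto (fun n : ℕ => ∑' k, if k ∈ Finset.Icc 1 n then a k / ψ n else 0)
      atTop (nhds (∑' _ : ℕ, (0 : ℝ))) := by
    refine tendsto_tsum_of_dominated_convergence hg ?_ ?_
    · intro k
      refine squeeze_zero_norm (a := fun n : ℕ => |a k / ψ n|) ?_ ?_
      · intro n
        split_ifs
        · exact le_of_eq (Real.norm_eq_abs _)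
        · simp
      · simpa using (hψn.const_div_atTop (a k)).abs
    · refine Eventually.of_forall fun n k => ?_
      split_ifs with h
      · obtain ⟨h1, h2⟩ := Finset.mem_Icc.1 h
        rw [Real.norm_eq_abs, abs_of_nonneg (div_nonneg (ha0 k h1) (hpn n (h1.trans h2)).le),
          abs_of_nonneg (div_nonneg (ha0 k h1) (hpn k h1).le)]
        refine div_le_div_of_nonneg_left (ha0 k h1) (hpn k h1) ?_
        exact hmono.monotoneOn (Set.mem_Ioi.2 (by exact_mod_cast h1))
          (Set.mem_Ioi.2 (by exact_mod_cast h1.trans h2)) (by exact_mod_cast h2)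
      · simp
  rw [tsum_zero] at key
  refine key.congr fun n => ?_
  rw [tsum_eq_sum (s := Finset.Icc 1 n) (fun k hk => if_neg hk), Apsi, Finset.sum_div]
  exact Finset.sum_congr rfl fun k hk => if_pos hk
end

section
/- For every δ ∈ (0,1], there exist a set A ⊆ ℕ and a non-negative non-increasing real sequence {c_n} such that the upper linear density of A equals δ, the lower linear density of A equals 0, the series Σ_{n=1}^∞ c_n diverges, and the sub-series Σ_{n=1}^∞ χ_A(n)·c_n converges. -/
open Filter

/-- A(n) = ∑_{k=1}^n χ_A(k). -/
noncomputable def Acount (A : Set ℕ) (n : ℕ) : ℝ :=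
  ∑ k ∈ Finset.Icc 1 n, A.indicator (fun _ => (1 : ℝ)) k


/-- The doubly exponential scale `N k = 2 ^ (4 ^ k)`. -/
def bigN (k : ℕ) : ℕ := 2 ^ (4 ^ k)

lemma bigN_succ (k : ℕ) : bigN (k + 1) = bigN k ^ 4 := by
  unfold bigN; rw [← pow_mul, pow_succ]

lemma bigN_ge (k : ℕ) : 2 ≤ bigN k := by
  unfold bigN
  calc 2 = 2 ^ 1 := by norm_num
    _ ≤ _ := Nat.pow_le_pow_right (by norm_num) (Nat.one_le_pow _ _ (by norm_num))

lemma bigN_mono : Monotone bigN := by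
  intro a b h
  exact Nat.pow_le_pow_right (by norm_num) (Nat.pow_le_pow_right (by norm_num) h)

lemma lt_bigN (k : ℕ) : k < bigN k := by
  unfold bigN
  calc k < 4 ^ k := Nat.lt_pow_self (by norm_num)
    _ < _ := Nat.lt_pow_self (by norm_num)

lemma exists_bigN (n : ℕ) : ∃ k, n ≤ bigN k := ⟨n, (lt_bigN n).le⟩

/-- index of the block containing `n`. -/
noncomputable def kap (n : ℕ) : ℕ := Nat.find (exists_bigN n)

lemma kap_mono : Monotone kap := by
  intro a b h
  exact Nat.find_min' _ (h.trans (Nat.find_spec (exists_bigN b)))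

lemma le_bigN_kap (n : ℕ) : n ≤ bigN (kap n) := Nat.find_spec (exists_bigN n)

lemma bigN_strict {k j : ℕ} (h : bigN k < bigN j) : k < j := by
  by_contra hh
  exact absurd (bigN_mono (not_lt.mp hh)) (not_le.mpr h)

lemma kap_gt {n k : ℕ} (h : bigN k < n) : k + 1 ≤ kap n :=
  bigN_strict (h.trans_le (le_bigN_kap n))

lemma kap_le {n k : ℕ} (h : n ≤ bigN k) : kap n ≤ k := Nat.find_min' _ h

/-- the sequence -/
noncomputable def cseq (n : ℕ) : ℝ := 1 / (bigN (kap n) : ℝ)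

/-- Beatty type set with counting function `⌊δ n⌋`. -/
def setB (δ : ℝ) : Set ℕ := {n | ⌊δ * ((n - 1 : ℕ) : ℝ)⌋₊ < ⌊δ * (n : ℝ)⌋₊}

/-- the set A -/
def setA (δ : ℝ) : Set ℕ := {n | n ∈ setB δ ∧ ∃ k, bigN k < n ∧ n ≤ bigN k ^ 2}

lemma Acount_succ (A : Set ℕ) (n : ℕ) :
    Acount A (n + 1) = Acount A n + A.indicator (fun _ => (1 : ℝ)) (n + 1) := by
  unfold Acount
  rw [Finset.sum_Icc_succ_top (by omega)]

lemma Acount_zero (A : Set ℕ) : Acount A 0 = 0 := by simp [Acount]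

lemma Acount_nonneg (A : Set ℕ) (n : ℕ) : 0 ≤ Acount A n := by
  unfold Acount
  exact Finset.sum_nonneg fun k _ => Set.indicator_nonneg (fun _ _ => zero_le_one) _

lemma Acount_setB {δ : ℝ} (h0 : 0 < δ) (h1 : δ ≤ 1) (n : ℕ) :
    Acount (setB δ) n = (⌊δ * (n : ℝ)⌋₊ : ℝ) := by
  induction n with
  | zero => simp [Acount_zero]
  | succ n ih =>
    rw [Acount_succ, ih]
    have hle : ⌊δ * (n : ℝ)⌋₊ ≤ ⌊δ * ((n + 1 : ℕ) : ℝ)⌋₊ := by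
      apply Nat.floor_mono; push_cast; nlinarith
    have hle2 : ⌊δ * ((n + 1 : ℕ) : ℝ)⌋₊ ≤ ⌊δ * (n : ℝ)⌋₊ + 1 := by
      rw [← Nat.floor_add_one (by positivity)]
      apply Nat.floor_mono; push_cast; nlinarith
    by_cases h : n + 1 ∈ setB δ
    · rw [Set.indicator_of_mem h]
      have h' : ⌊δ * (n : ℝ)⌋₊ < ⌊δ * ((n + 1 : ℕ) : ℝ)⌋₊ := h
      have : ⌊δ * ((n + 1 : ℕ) : ℝ)⌋₊ = ⌊δ * (n : ℝ)⌋₊ + 1 := by omega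
      rw [this]; push_cast; rfl
    · rw [Set.indicator_of_notMem h]
      have h' : ¬ ⌊δ * (n : ℝ)⌋₊ < ⌊δ * ((n + 1 : ℕ) : ℝ)⌋₊ := h
      have : ⌊δ * ((n + 1 : ℕ) : ℝ)⌋₊ = ⌊δ * (n : ℝ)⌋₊ := by omega
      rw [this]; simp

lemma Acount_setA_le {δ : ℝ} (h0 : 0 < δ) (h1 : δ ≤ 1) (n : ℕ) :
    Acount (setA δ) n ≤ δ * n := by
  calc Acount (setA δ) n ≤ Acount (setB δ) n := by
        unfold Acount
        apply Finset.sum_le_sum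
        intro k _
        exact Set.indicator_le_indicator_of_subset (fun x hx => hx.1) (fun _ => zero_le_one) k
    _ = _ := Acount_setB h0 h1 n
    _ ≤ _ := Nat.floor_le (by positivity)

lemma Acount_setA_ge {δ : ℝ} (h0 : 0 < δ) (h1 : δ ≤ 1) (k m : ℕ) (hm : m ≤ bigN k ^ 2) :
    Acount (setB δ) m ≤ Acount (setA δ) m + bigN k := by
  induction m with
  | zero => simp [Acount_zero]
  | succ m ih =>
    by_cases h : m + 1 ≤ bigN k
    · have e1 : Acount (setB δ) (m + 1) ≤ δ * ((m + 1 : ℕ) : ℝ) := by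
        rw [Acount_setB h0 h1]; exact Nat.floor_le (by positivity)
      have e2 : ((m + 1 : ℕ) : ℝ) ≤ bigN k := by exact_mod_cast h
      have e3 := Acount_nonneg (setA δ) (m + 1)
      have e4 : (0 : ℝ) ≤ ((m + 1 : ℕ) : ℝ) := by positivity
      nlinarith
    · have ih' := ih (by omega)
      rw [Acount_succ, Acount_succ]
      have : (setB δ).indicator (fun _ => (1 : ℝ)) (m + 1)
          ≤ (setA δ).indicator (fun _ => (1 : ℝ)) (m + 1) := by
        by_cases hb : m + 1 ∈ setB δ
        · have ha : m + 1 ∈ setA δ := ⟨hb, k, by omega, hm⟩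
          rw [Set.indicator_of_mem hb, Set.indicator_of_mem ha]
        · rw [Set.indicator_of_notMem hb]
          exact Set.indicator_nonneg (fun _ _ => zero_le_one) _
      linarith

lemma Acount_setA_gap {δ : ℝ} (h0 : 0 < δ) (h1 : δ ≤ 1) (k m : ℕ) (h : bigN k ^ 2 ≤ m)
    (hm : m ≤ bigN (k + 1)) : Acount (setA δ) m ≤ (bigN k : ℝ) ^ 2 := by
  induction m, h using Nat.le_induction with
  | base =>
    have := Acount_setA_le h0 h1 (bigN k ^ 2)
    push_cast at this
    have e : (0 : ℝ) ≤ (bigN k : ℝ) ^ 2 := by positivity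
    nlinarith
  | succ m hle ih =>
    rw [Acount_succ, Set.indicator_of_notMem]
    · simpa using ih (by omega)
    · rintro ⟨-, j, hj1, hj2⟩
      have a1 : j < k + 1 := bigN_strict (hj1.trans_le hm)
      have a2 : bigN j ≤ bigN k := bigN_mono (by omega)
      have a3 : bigN j ^ 2 ≤ bigN k ^ 2 := Nat.pow_le_pow_left a2 2
      omega

lemma bigN_pos (k : ℕ) : (0 : ℝ) < bigN k := by
  have := bigN_ge k
  exact_mod_cast (by omega : 0 < bigN k)

lemma cseq_nonneg (n : ℕ) : 0 ≤ cseq n := by unfold cseq; positivity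

lemma cseq_anti {m n : ℕ} (h : m ≤ n) : cseq n ≤ cseq m := by
  unfold cseq
  apply one_div_le_one_div_of_le (bigN_pos _)
  exact_mod_cast bigN_mono (kap_mono h)

lemma cseq_not_summable : ¬ Summable cseq := by
  rw [← summable_condensed_iff_of_nonneg cseq_nonneg (fun m n _ h => cseq_anti h)]
  intro h
  have h1 := h.tendsto_atTop_zero
  have h2 : Tendsto (fun k : ℕ => 4 ^ k) atTop (atTop : Filter ℕ) :=
    tendsto_pow_atTop_atTop_of_one_lt (by norm_num)
  have h3 := h1.comp h2
  have h4 : ∀ k : ℕ, (1 : ℝ) ≤ ((fun k : ℕ => (2 : ℝ) ^ k * cseq (2 ^ k)) ∘ fun k : ℕ => 4 ^ k) k := by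
    intro k
    have hk : kap (bigN k) ≤ k := kap_le le_rfl
    have e1 : 1 / (bigN k : ℝ) ≤ cseq (bigN k) := by
      unfold cseq
      apply one_div_le_one_div_of_le (bigN_pos _)
      exact_mod_cast bigN_mono hk
    have e2 : ((2 : ℝ) ^ (4 ^ k)) = (bigN k : ℝ) := by simp [bigN]
    change 1 ≤ (2 : ℝ) ^ (4 ^ k) * cseq (bigN k)
    rw [e2]
    calc (1 : ℝ) = bigN k * (1 / (bigN k : ℝ)) := by
          have := bigN_pos k
          field_simp
      _ ≤ _ := mul_le_mul_of_nonneg_left e1 (bigN_pos k).le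
  have := ge_of_tendsto' h3 h4
  norm_num at this

lemma cseq_summable (δ : ℝ) : Summable (fun n => (setA δ).indicator cseq n) := by
  have hs : Summable (fun n : ℕ => 1 / (n : ℝ) ^ 2) :=
    Real.summable_one_div_nat_pow.mpr (by norm_num)
  refine Summable.of_nonneg_of_le (fun n => Set.indicator_nonneg (fun n _ => cseq_nonneg n) _)
    (fun n => ?_) hs
  by_cases h : n ∈ setA δ
  · rw [Set.indicator_of_mem h]
    obtain ⟨-, k, h1, h2⟩ := h
    unfold cseq
    have hn : (0 : ℝ) < n := by exact_mod_cast (by omega : 0 < n)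
    apply one_div_le_one_div_of_le (by positivity)
    have a1 : bigN (k + 1) ≤ bigN (kap n) := bigN_mono (kap_gt h1)
    have a2 : n ^ 2 ≤ (bigN k ^ 2) ^ 2 := Nat.pow_le_pow_left h2 2
    rw [bigN_succ] at a1
    rw [← pow_mul] at a2
    exact_mod_cast a2.trans a1
  · rw [Set.indicator_of_notMem h]; positivity

lemma bigN_tendsto : Tendsto bigN atTop atTop :=
  tendsto_atTop_mono (fun k => (lt_bigN k).le) tendsto_id

lemma bigN_inv_tendsto : Tendsto (fun k => ((bigN k : ℝ))⁻¹) atTop (nhds 0) :=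
  tendsto_inv_atTop_zero.comp (tendsto_natCast_atTop_atTop.comp bigN_tendsto)

lemma ratio_le {δ : ℝ} (h0 : 0 < δ) (h1 : δ ≤ 1) (n : ℕ) :
    Acount (setA δ) n / n ≤ δ := by
  rcases Nat.eq_zero_or_pos n with h | h
  · subst h; simp [h0.le]
  · rw [div_le_iff₀ (by exact_mod_cast h)]
    exact Acount_setA_le h0 h1 n

lemma ratio_nonneg (δ : ℝ) (n : ℕ) : 0 ≤ Acount (setA δ) n / n :=
  div_nonneg (Acount_nonneg _ _) (by positivity)

lemma ratio_high {δ : ℝ} (h0 : 0 < δ) (h1 : δ ≤ 1) (k : ℕ) :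
    δ - 2 * ((bigN k : ℝ))⁻¹ ≤ Acount (setA δ) (bigN k ^ 2) / ((bigN k ^ 2 : ℕ) : ℝ) := by
  have hN := bigN_pos k
  have hN2 : (2 : ℝ) ≤ bigN k := by exact_mod_cast bigN_ge k
  rw [le_div_iff₀ (by exact_mod_cast (by positivity : (0 : ℝ) < (bigN k : ℝ) ^ 2))]
  have a := Acount_setA_ge h0 h1 k (bigN k ^ 2) le_rfl
  rw [Acount_setB h0 h1] at a
  have b := (Nat.lt_floor_add_one (δ * ((bigN k ^ 2 : ℕ) : ℝ))).le
  have c : (δ - 2 * ((bigN k : ℝ))⁻¹) * ((bigN k ^ 2 : ℕ) : ℝ)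
      = δ * ((bigN k ^ 2 : ℕ) : ℝ) - 2 * bigN k := by
    push_cast; field_simp
  rw [c]
  linarith

lemma ratio_low {δ : ℝ} (h0 : 0 < δ) (h1 : δ ≤ 1) (k : ℕ) :
    Acount (setA δ) (bigN (k + 1)) / (bigN (k + 1) : ℝ) ≤ ((bigN k : ℝ))⁻¹ := by
  have hN := bigN_pos k
  have hN2 : (1 : ℝ) ≤ bigN k := by exact_mod_cast (by norm_num : 1 ≤ 2).trans (bigN_ge k)
  have a := Acount_setA_gap h0 h1 k (bigN (k + 1)) (by
    rw [bigN_succ]; exact Nat.pow_le_pow_right (by have := bigN_ge k; omega) (by norm_num)) le_rfl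
  rw [div_le_iff₀ (bigN_pos _)]
  refine a.trans ?_
  rw [bigN_succ]; push_cast
  have : ((bigN k : ℝ))⁻¹ * (bigN k : ℝ) ^ 4 = (bigN k : ℝ) ^ 3 := by field_simp
  rw [this]
  exact pow_le_pow_right₀ hN2 (by norm_num)

/-- for every δ ∈ (0,1] there are A ⊆ ℕ and a nonneg non-increasing
sequence {c_n} with d̄(A) = δ, d̲(A) = 0, Σ c_n = ∞ and Σ χ_A(n) c_n < ∞. -/
theorem stmt2 (δ : ℝ) (hδ : δ ∈ Set.Ioc (0:ℝ) 1) :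
    ∃ (A : Set ℕ) (c : ℕ → ℝ),
      (∀ n : ℕ, 1 ≤ n → 0 ≤ c n) ∧ (∀ n : ℕ, 1 ≤ n → c (n + 1) ≤ c n) ∧
      limsup (fun n : ℕ => Acount A n / n) atTop = δ ∧
      liminf (fun n : ℕ => Acount A n / n) atTop = 0 ∧
      ¬ Summable c ∧ Summable (fun n => A.indicator c n) := by
  obtain ⟨h0, h1⟩ := hδ
  have hbd : IsBoundedUnder (· ≤ ·) atTop (fun n : ℕ => Acount (setA δ) n / n) :=
    isBoundedUnder_of ⟨δ, ratio_le h0 h1⟩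
  have hbd' : IsBoundedUnder (· ≥ ·) atTop (fun n : ℕ => Acount (setA δ) n / n) :=
    isBoundedUnder_of ⟨0, ratio_nonneg δ⟩
  refine ⟨setA δ, cseq, fun n _ => cseq_nonneg n, fun n _ => cseq_anti (Nat.le_succ n), ?_, ?_,
    cseq_not_summable, cseq_summable δ⟩
  · apply le_antisymm
    · exact limsup_le_of_le hbd'.isCoboundedUnder_le (Eventually.of_forall (ratio_le h0 h1))
    · apply le_of_forall_pos_le_add
      intro ε hε
      rw [← sub_le_iff_le_add]
      refine le_limsup_of_frequently_le ?_ hbd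
      have ht : Tendsto (fun k => bigN k ^ 2) atTop atTop :=
        tendsto_atTop_mono (fun k => Nat.le_self_pow (by norm_num) _) bigN_tendsto
      refine ht.frequently (Eventually.frequently ?_)
      filter_upwards [bigN_inv_tendsto.eventually (gt_mem_nhds (half_pos hε))] with k hk
      have := ratio_high h0 h1 k
      linarith
  · apply le_antisymm
    · apply le_of_forall_pos_le_add
      intro ε hε
      refine liminf_le_of_frequently_le ?_ hbd'
      have ht : Tendsto (fun k => bigN (k + 1)) atTop atTop :=
        bigN_tendsto.comp (tendsto_add_atTop_nat 1)
      refine ht.frequently (Eventually.frequently ?_)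
      filter_upwards [bigN_inv_tendsto.eventually (gt_mem_nhds hε)] with k hk
      have := ratio_low h0 h1 k
      linarith
    · exact le_liminf_of_le hbd.isCoboundedUnder_ge (Eventually.of_forall (ratio_nonneg δ))
end

section
/- For every δ ∈ (0,1), there exist a function ψ ∈ 𝒟₁, a set A ⊆ ℕ and a sequence {c_n} of positive real numbers such that Σ_{n=1}^∞ ψ'(n)·c_n diverges, Σ_{n=1}^∞ χ_A(n)·c_n converges, and the upper asymptotic ψ-density of A satisfies d̄_ψ(A) ≥ δ. -/
open Filter

lemma Apsi_id_eq (M n : ℕ) :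
    Apsi (fun x => x) {k | ¬ M ∣ k} n = (n : ℝ) - ((n / M : ℕ) : ℝ) := by
  have h : ∀ k ∈ Finset.Icc 1 n, deriv (fun x : ℝ => x) (k : ℝ) *
      Set.indicator {k : ℕ | ¬ M ∣ k} (fun _ => (1 : ℝ)) k
      = 1 - (if M ∣ k then (1 : ℝ) else 0) := by
    intro k _
    by_cases hk : M ∣ k <;> simp [hk]
  unfold Apsi
  rw [Finset.sum_congr rfl h, Finset.sum_sub_distrib, Finset.sum_boole]
  have h2 : Finset.Icc 1 n = Finset.Ioc 0 n := by ext; simp; omega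
  rw [h2, Nat.Ioc_filter_dvd_card_eq_div]
  simp

/-- for every δ ∈ (0,1) there are ψ ∈ 𝒟₁, A ⊆ ℕ and positive {c_n}
with Σ ψ'(n)c_n = ∞, Σ χ_A(n)c_n < ∞ and d̄_ψ(A) ≥ δ. -/
theorem stmt3 (δ : ℝ) (hδ : δ ∈ Set.Ioo (0:ℝ) 1) :
    ∃ (ψ : ℝ → ℝ) (A : Set ℕ) (c : ℕ → ℝ),
      memD1 ψ ∧ (∀ n : ℕ, 1 ≤ n → 0 < c n) ∧
      ¬ Summable (fun n : ℕ => deriv ψ (n : ℝ) * c n) ∧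
      Summable (fun n => A.indicator c n) ∧
      δ ≤ limsup (fun n : ℕ => Apsi ψ A n / ψ n) atTop := by
  obtain ⟨m, hm⟩ := exists_nat_one_div_lt (sub_pos.2 hδ.2)
  set M := m + 1 with hM
  have hm' : (1 : ℝ) / (M : ℝ) < 1 - δ := by rw [hM]; push_cast; exact hm
  refine ⟨fun x => x, {k | ¬ M ∣ k}, fun n => if M ∣ n then 1 else (1 / 2 : ℝ) ^ n,
    ⟨⟨?_, ?_, ?_, ?_⟩, ?_⟩, ?_, ?_, ?_, ?_⟩
  · exact strictMono_id.strictMonoOn _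
  · intro x hx; exact hx
  · intro x _; exact differentiableAt_id
  · exact tendsto_id
  · exact concaveOn_id (convex_Ioi 0)
  · intro n _
    dsimp only
    split_ifs <;> positivity
  · intro hs
    have ht := hs.tendsto_atTop_zero
    have h1 := ht.eventually (gt_mem_nhds (zero_lt_one (α := ℝ)))
    obtain ⟨N, hN⟩ := eventually_atTop.1 h1
    have := hN (M * N) (Nat.le_mul_of_pos_left N (by omega))
    simp at this
  · refine Summable.of_nonneg_of_le (fun n => ?_) (fun n => ?_) summable_geometric_two
    · by_cases hk : M ∣ n <;> simp [hk]
    · by_cases hk : M ∣ n <;> simp [hk]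
  · refine le_limsup_of_frequently_le (Eventually.frequently ?_) ?_
    · filter_upwards [eventually_ge_atTop 1] with n hn
      have hn' : (0 : ℝ) < n := by exact_mod_cast hn
      rw [Apsi_id_eq, le_div_iff₀ hn']
      have h1 : ((n / M : ℕ) : ℝ) ≤ n / M := Nat.cast_div_le
      have h2 : (n : ℝ) / M = n * (1 / M) := by ring
      nlinarith
    · refine isBoundedUnder_of ⟨1, fun n => ?_⟩
      rw [Apsi_id_eq]
      refine div_le_one_of_le₀ ?_ (Nat.cast_nonneg n)
      have : (0 : ℝ) ≤ ((n / M : ℕ) : ℝ) := Nat.cast_nonneg _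
      linarith
end

section
/- Let ψ ∈ 𝒟, and let {c_n} be a non-negative real sequence such that the sequence {c_n/ψ'(n)} is non-increasing and tends to zero. If A ⊆ ℕ is an infinite set such that Σ_{n=1}^∞ χ_A(n)·c_n converges, then (A_ψ(n)/ψ'(n))·c_n → 0 as n → ∞. -/
open Filter

/-- ψ ∈ 𝒟, c nonneg with c_n/ψ'(n) non-increasing and → 0;
if Σ χ_A(n) c_n converges then (A_ψ(n)/ψ'(n))·c_n → 0. -/
theorem stmt4 (ψ : ℝ → ℝ) (hψ : memD ψ) (c : ℕ → ℝ)
    (hc_nonneg : ∀ n : ℕ, 1 ≤ n → 0 ≤ c n)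
    (hmono : ∀ n : ℕ, 1 ≤ n →
      c (n + 1) / deriv ψ ((n + 1 : ℕ) : ℝ) ≤ c n / deriv ψ (n : ℝ))
    (hzero : Tendsto (fun n : ℕ => c n / deriv ψ (n : ℝ)) atTop (nhds 0))
    (A : Set ℕ) (hA : A.Infinite)
    (hconv : Summable (fun n => A.indicator c n)) :
    Tendsto (fun n : ℕ => Apsi ψ A n / deriv ψ (n : ℝ) * c n) atTop (nhds 0) := by
  have hd : ∀ k : ℕ, 1 ≤ k → 0 ≤ deriv ψ (k : ℝ) := by
    intro k hk
    have hk' : (k : ℝ) ∈ Set.Ioi (0 : ℝ) := by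
      simp only [Set.mem_Ioi, Nat.cast_pos]; omega
    rw [← derivWithin_of_isOpen isOpen_Ioi hk']
    exact hψ.1.monotoneOn.derivWithin_nonneg
  have hanti : ∀ k n : ℕ, 1 ≤ k → k ≤ n →
      c n / deriv ψ (n : ℝ) ≤ c k / deriv ψ (k : ℝ) := by
    intro k n hk hkn
    induction n, hkn using Nat.le_induction with
    | base => exact le_rfl
    | succ n hn ih => exact (hmono n (hk.trans hn)).trans ih
  let f : ℕ → ℕ → ℝ := fun n k => if k ∈ Finset.Icc 1 n then
    deriv ψ (k : ℝ) * A.indicator (fun _ => (1 : ℝ)) k * (c n / deriv ψ (n : ℝ)) else 0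
  have hsum : ∀ n : ℕ, ∑' k, f n k = Apsi ψ A n / deriv ψ (n : ℝ) * c n := by
    intro n
    rw [tsum_eq_sum (s := Finset.Icc 1 n) (fun k hk => by simp only [f, if_neg hk])]
    rw [Finset.sum_congr rfl (fun k hk => by simp only [f, if_pos hk]; rfl),
      ← Finset.sum_mul]
    unfold Apsi
    ring
  have key : Tendsto (fun n => ∑' k, f n k) atTop (nhds (∑' _ : ℕ, (0 : ℝ))) := by
    refine tendsto_tsum_of_dominated_convergence (bound := fun k => |A.indicator c k|)
      hconv.abs ?_ ?_
    · intro k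
      have h1 : Tendsto (fun n : ℕ => deriv ψ (k : ℝ) * A.indicator (fun _ => (1 : ℝ)) k *
          (c n / deriv ψ (n : ℝ))) atTop (nhds 0) := by
        simpa using hzero.const_mul (deriv ψ (k : ℝ) * A.indicator (fun _ => (1 : ℝ)) k)
      have h2 := h1.norm
      rw [norm_zero] at h2
      refine squeeze_zero_norm (fun n => ?_) h2
      by_cases hk : k ∈ Finset.Icc 1 n
      · simp only [f, if_pos hk]; exact le_rfl
      · simp only [f, if_neg hk, norm_zero]; exact norm_nonneg _
    · refine Eventually.of_forall fun n k => ?_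
      by_cases hk : k ∈ Finset.Icc 1 n
      · simp only [f, if_pos hk]
        obtain ⟨h1, h2⟩ := Finset.mem_Icc.mp hk
        by_cases hkA : k ∈ A
        · simp only [Set.indicator_of_mem hkA, mul_one]
          have hn : 0 ≤ c n / deriv ψ (n : ℝ) :=
            div_nonneg (hc_nonneg n (h1.trans h2)) (hd n (h1.trans h2))
          rw [Real.norm_of_nonneg (mul_nonneg (hd k h1) hn), abs_of_nonneg (hc_nonneg k h1)]
          refine (mul_le_mul_of_nonneg_left (hanti k n h1 h2) (hd k h1)).trans ?_
          by_cases h0 : deriv ψ (k : ℝ) = 0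
          · rw [h0, zero_mul]; exact hc_nonneg k h1
          · rw [mul_div_cancel₀ _ h0]
        · simp [Set.indicator_of_notMem hkA]
      · simp only [f, if_neg hk, norm_zero]
        exact abs_nonneg _
  simpa only [tsum_zero, hsum] using key
end

section
/- Let ψ ∈ 𝒟 satisfy Σ_{k=1}^n ψ'(k) ~ ψ(n) as n → ∞, and let {c_n} be a non-negative real sequence such that {c_n/ψ'(n)} is non-increasing and tends to zero, and such that liminf_{n→∞} (ψ(n)/ψ'(n))·c_n > 0. If A ⊆ ℕ is an infinite set such that Σ_{n=1}^∞ χ_A(n)·c_n converges, then the asymptotic ψ-density of A is zero, i.e. lim_{n→∞} A_ψ(n)/ψ(n) = 0. -/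
open Filter

/-- ψ ∈ 𝒟 with ∑_{k≤n} ψ'(k) ~ ψ(n), c nonneg with c_n/ψ'(n)
non-increasing → 0 and liminf (ψ(n)/ψ'(n))c_n > 0; if Σ χ_A(n) c_n converges
then the asymptotic ψ-density of A is 0. -/
theorem stmt5 (ψ : ℝ → ℝ) (hψ : memD ψ)
    (hasym : Tendsto (fun n : ℕ => Spsi ψ n / ψ n) atTop (nhds 1))
    (c : ℕ → ℝ)
    (hc_nonneg : ∀ n : ℕ, 1 ≤ n → 0 ≤ c n)
    (hmono : ∀ n : ℕ, 1 ≤ n →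
      c (n + 1) / deriv ψ ((n + 1 : ℕ) : ℝ) ≤ c n / deriv ψ (n : ℝ))
    (hzero : Tendsto (fun n : ℕ => c n / deriv ψ (n : ℝ)) atTop (nhds 0))
    (hliminf : ∃ δ > (0:ℝ), ∀ᶠ n : ℕ in atTop, δ ≤ ψ n / deriv ψ n * c n)
    (A : Set ℕ) (hA : A.Infinite)
    (hconv : Summable (fun n => A.indicator c n)) :
    Tendsto (fun n : ℕ => Apsi ψ A n / ψ n) atTop (nhds 0) := by
  obtain ⟨hmonoψ, hpos, hdiff, htop⟩ := hψ
  obtain ⟨δ, hδ, hl⟩ := hliminf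
  obtain ⟨N, hN⟩ := eventually_atTop.1 hl
  have hd : ∀ k : ℕ, 1 ≤ k → 0 ≤ deriv ψ (k : ℝ) := by
    intro k hk
    have hk0 : (k : ℝ) ∈ Set.Ioi (0 : ℝ) := by
      have : (0 : ℝ) < k := by exact_mod_cast hk
      exact this
    have h := hmonoψ.monotoneOn.derivWithin_nonneg (x := (k : ℝ))
    rwa [derivWithin_of_isOpen isOpen_Ioi hk0] at h
  have hψpos : ∀ k : ℕ, 1 ≤ k → 0 < ψ (k : ℝ) := by
    intro k hk
    have : (0 : ℝ) < k := by exact_mod_cast hk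
    exact hpos _ this
  have hb : ∀ k n : ℕ, 1 ≤ k → k ≤ n →
      c n / deriv ψ (n : ℝ) ≤ c k / deriv ψ (k : ℝ) := by
    intro k n hk hkn
    induction n, hkn using Nat.le_induction with
    | base => exact le_rfl
    | succ m hm ih => exact (hmono m (hk.trans hm)).trans ih
  have hi : ∀ k, 0 ≤ A.indicator (fun _ => (1 : ℝ)) k :=
    fun k => Set.indicator_nonneg (fun _ _ => zero_le_one) k
  have hA0 : ∀ n, 0 ≤ Apsi ψ A n := by
    intro n
    refine Finset.sum_nonneg fun k hk => ?_
    exact mul_nonneg (hd k (Finset.mem_Icc.1 hk).1) (hi k)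
  -- key termwise bound
  have key : ∀ k n : ℕ, 1 ≤ k → N ≤ k → k ≤ n →
      δ * (deriv ψ (k : ℝ) * A.indicator (fun _ => (1 : ℝ)) k) ≤ ψ n * A.indicator c k := by
    intro k n hk hNk hkn
    by_cases hkA : k ∈ A
    · simp only [Set.indicator_of_mem hkA, mul_one]
      have h1 := hN n (hNk.trans hkn)
      have h2 := hb k n hk hkn
      have h3 := hN k hNk
      have hdk : deriv ψ (k : ℝ) ≠ 0 := by
        intro h0
        rw [h0] at h3
        simp at h3
        linarith
      have hp := hψpos n (hk.trans hkn)
      have h4 : δ ≤ ψ n * (c k / deriv ψ (k : ℝ)) := by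
        calc δ ≤ ψ n / deriv ψ n * c n := h1
          _ = ψ n * (c n / deriv ψ n) := by ring
          _ ≤ _ := mul_le_mul_of_nonneg_left h2 hp.le
      calc δ * deriv ψ (k : ℝ) ≤ ψ n * (c k / deriv ψ (k : ℝ)) * deriv ψ (k : ℝ) :=
            mul_le_mul_of_nonneg_right h4 (hd k hk)
        _ = ψ n * c k := by field_simp
    · simp [Set.indicator_of_notMem hkA]
  rw [Metric.tendsto_atTop]
  intro ε hε
  obtain ⟨s, hs⟩ := summable_iff_vanishing_norm.1 hconv (δ * (ε / 2)) (by positivity)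
  set M : ℕ := max (max N 1) (s.sup id) with hM
  have hMN : N ≤ M := (le_max_left _ _).trans (le_max_left _ _)
  have hM1 : 1 ≤ M := (le_max_right _ _).trans (le_max_left _ _)
  have hψn : Tendsto (fun n : ℕ => ψ (n : ℝ)) atTop atTop :=
    htop.comp tendsto_natCast_atTop_atTop
  obtain ⟨K, hK⟩ := eventually_atTop.1 (hψn.eventually_gt_atTop (Apsi ψ A M / (ε / 2)))
  refine ⟨max K M, fun n hn => ?_⟩
  have hKn : K ≤ n := (le_max_left _ _).trans hn
  have hMn : M ≤ n := (le_max_right _ _).trans hn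
  have hp := hψpos n (hM1.trans hMn)
  have h1 : Apsi ψ A M < ε / 2 * ψ n := by
    have := hK n hKn
    rw [div_lt_iff₀ (by positivity)] at this
    linarith
  have hdisj : Disjoint (Finset.Ioc M n) s := by
    rw [Finset.disjoint_left]
    intro k hk hks
    have h2 : k ≤ s.sup id := Finset.le_sup (f := id) hks
    have h3 : s.sup id ≤ M := le_max_right _ _
    have h4 := (Finset.mem_Ioc.1 hk).1
    omega
  have h2 : ∑ k ∈ Finset.Ioc M n, A.indicator c k < δ * (ε / 2) :=
    (le_abs_self _).trans_lt (hs _ hdisj)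
  have hsplit : Apsi ψ A n = Apsi ψ A M +
      ∑ k ∈ Finset.Ioc M n, deriv ψ (k : ℝ) * A.indicator (fun _ => (1 : ℝ)) k := by
    unfold Apsi
    rw [← Finset.sum_union]
    · congr 1
      ext k
      simp only [Finset.mem_Icc, Finset.mem_union, Finset.mem_Ioc]
      omega
    · rw [Finset.disjoint_left]
      intro k hk hk'
      simp only [Finset.mem_Icc, Finset.mem_Ioc] at hk hk'
      omega
  have h3 : δ * ∑ k ∈ Finset.Ioc M n, deriv ψ (k : ℝ) * A.indicator (fun _ => (1 : ℝ)) k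
      ≤ ψ n * ∑ k ∈ Finset.Ioc M n, A.indicator c k := by
    rw [Finset.mul_sum, Finset.mul_sum]
    refine Finset.sum_le_sum fun k hk => ?_
    obtain ⟨ha, hb'⟩ := Finset.mem_Ioc.1 hk
    exact key k n (by omega) (by omega) hb'
  have h4 : ∑ k ∈ Finset.Ioc M n, deriv ψ (k : ℝ) * A.indicator (fun _ => (1 : ℝ)) k
      < ε / 2 * ψ n := by
    have h5 := mul_lt_mul_of_pos_left h2 hp
    have h6 := h3.trans_lt h5
    refine lt_of_mul_lt_mul_left ?_ hδ.le
    linarith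
  rw [Real.dist_eq, sub_zero, abs_of_nonneg (div_nonneg (hA0 n) hp.le), div_lt_iff₀ hp, hsplit]
  linarith
end

section
/- Suppose ψ ∈ 𝒟 satisfies Σ_{k=1}^n ψ'(k) ~ ψ(n) as n → ∞, and let {c_n} be a non-negative real sequence such that the sequence {c_n/ψ'(n)} is non-increasing. If the series Σ_{n=1}^∞ c_n converges, then lim_{n→∞} (ψ(n)/ψ'(n))·c_n = 0. -/
open Filter

/-- ψ ∈ 𝒟 with ∑_{k≤n} ψ'(k) ~ ψ(n), c nonneg with c_n/ψ'(n)
non-increasing; if Σ c_n converges then (ψ(n)/ψ'(n))·c_n → 0. -/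
theorem stmt6 (ψ : ℝ → ℝ) (hψ : memD ψ)
    (hasym : Tendsto (fun n : ℕ => Spsi ψ n / ψ n) atTop (nhds 1))
    (c : ℕ → ℝ)
    (hc_nonneg : ∀ n : ℕ, 1 ≤ n → 0 ≤ c n)
    (hmono : ∀ n : ℕ, 1 ≤ n →
      c (n + 1) / deriv ψ ((n + 1 : ℕ) : ℝ) ≤ c n / deriv ψ (n : ℝ))
    (hconv : Summable c) :
    Tendsto (fun n : ℕ => ψ n / deriv ψ (n : ℝ) * c n) atTop (nhds 0) := by
  obtain ⟨hsm, hpos, hdiff, htop⟩ := hψ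
  have hd : ∀ k : ℕ, 1 ≤ k → 0 ≤ deriv ψ (k : ℝ) := by
    intro k hk
    have hk0 : (0:ℝ) < k := by exact_mod_cast hk
    have hw : derivWithin ψ (Set.Ioi 0) (k:ℝ) = deriv ψ (k:ℝ) :=
      derivWithin_of_isOpen isOpen_Ioi hk0
    rw [← hw]
    exact hsm.monotoneOn.derivWithin_nonneg
  have ha0 : ∀ k : ℕ, 1 ≤ k → 0 ≤ c k / deriv ψ (k : ℝ) := fun k hk =>
    div_nonneg (hc_nonneg k hk) (hd k hk)
  have hanti : ∀ m n : ℕ, 1 ≤ m → m ≤ n →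
      c n / deriv ψ (n : ℝ) ≤ c m / deriv ψ (m : ℝ) := by
    intro m n hm hmn
    induction n, hmn using Nat.le_induction with
    | base => exact le_rfl
    | succ n hn ih => exact (hmono n (hm.trans hn)).trans ih
  have hac : ∀ k : ℕ, 1 ≤ k → c k / deriv ψ (k : ℝ) * deriv ψ (k : ℝ) ≤ c k := by
    intro k hk
    by_cases h : deriv ψ (k : ℝ) = 0
    · rw [h]; simpa using hc_nonneg k hk
    · rw [div_mul_cancel₀ _ h]
  rw [Metric.tendsto_atTop']
  intro ε hε
  obtain ⟨s, hs⟩ := summable_iff_vanishing_norm.1 hconv (ε / 2) (by positivity)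
  set m : ℕ := s.sup id with hm
  have htop' : Tendsto (fun n : ℕ => ψ (n : ℝ)) atTop atTop :=
    htop.comp tendsto_natCast_atTop_atTop
  have e1 := htop'.eventually_ge_atTop (4 * Spsi ψ m)
  have e2 := hasym.eventually (lt_mem_nhds (show (3/4 : ℝ) < 1 by norm_num))
  obtain ⟨N, hN⟩ := eventually_atTop.1 (e1.and (e2.and (eventually_ge_atTop (m + 1))))
  refine ⟨N, fun n hn => ?_⟩
  obtain ⟨h1, h2, h3⟩ := hN n hn.le
  have hn1 : 1 ≤ n := by omega
  have hψn : 0 < ψ (n : ℝ) := hpos _ (by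
    show (0:ℝ) < n
    exact_mod_cast hn1)
  rw [lt_div_iff₀ hψn] at h2
  have hS : ∀ j : ℕ, Spsi ψ j = ∑ k ∈ Finset.Ioc 0 j, deriv ψ (k : ℝ) := by
    intro j
    rfl
  have hsplit : Spsi ψ n = Spsi ψ m + ∑ k ∈ Finset.Ioc m n, deriv ψ (k : ℝ) := by
    rw [hS, hS, Finset.sum_Ioc_consecutive _ (Nat.zero_le m) (by omega)]
  have htail := hs (Finset.Ioc m n) (by
    rw [Finset.disjoint_left]
    intro x hx hxs
    have h4 : x ≤ m := Finset.le_sup (f := id) hxs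
    have h5 := (Finset.mem_Ioc.1 hx).1
    omega)
  have htail' := (le_abs_self _).trans_lt htail
  have hle : c n / deriv ψ (n : ℝ) * ∑ k ∈ Finset.Ioc m n, deriv ψ (k : ℝ)
      ≤ ∑ k ∈ Finset.Ioc m n, c k := by
    rw [Finset.mul_sum]
    refine Finset.sum_le_sum fun k hk => ?_
    obtain ⟨hk1, hk2⟩ := Finset.mem_Ioc.1 hk
    have hk3 : 1 ≤ k := by omega
    exact (mul_le_mul_of_nonneg_right (hanti k n hk3 hk2) (hd k hk3)).trans (hac k hk3)
  have hhalf : ψ (n:ℝ) / 2 ≤ ∑ k ∈ Finset.Ioc m n, deriv ψ (k : ℝ) := by linarith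
  have hfin := mul_le_mul_of_nonneg_left hhalf (ha0 n hn1)
  have heq : ψ (n:ℝ) / deriv ψ (n : ℝ) * c n = c n / deriv ψ (n : ℝ) * ψ (n:ℝ) := by ring
  rw [heq, Real.dist_eq, sub_zero, abs_of_nonneg (mul_nonneg (ha0 n hn1) hψn.le)]
  linarith
end

section
/- Let ψ ∈ 𝒟₁, and let A ⊆ ℕ be an infinite set with lower asymptotic ψ-density zero, i.e. liminf_{n→∞} A_ψ(n)/ψ(n) = 0. Then there exists a sequence {c_n} of positive real numbers such that Σ_{n=1}^∞ c_n diverges, the sequence {c_n/ψ'(n)} is non-increasing, and the sub-series Σ_{n=1}^∞ χ_A(n)·c_n converges. -/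
open Filter

theorem swap_aux (a : ℕ → ℝ) (ha : ∀ j, 0 ≤ a j) (hs : Summable a) (N : ℕ → ℕ)
    (v : ℕ → ℝ) (hv : ∀ n, 1 ≤ n → 0 ≤ v n) :
    Summable (fun j => a j * ∑ n ∈ Finset.Icc 1 (N j), v n) ↔
    Summable (fun n => v n * ∑' j, a j * (if n ∈ Finset.Icc 1 (N j) then (1:ℝ) else 0)) := by
  set G : ℕ × ℕ → ℝ := fun p => v p.2 * (a p.1 * (if p.2 ∈ Finset.Icc 1 (N p.1) then (1:ℝ) else 0))
    with hG
  have hG0 : 0 ≤ G := by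
    intro p
    simp only [hG, Pi.zero_apply]
    split_ifs with h
    · have := hv p.2 (Finset.mem_Icc.1 h).1
      have := ha p.1
      positivity
    · simp
  have hcol : ∀ n, Summable (fun j => a j * (if n ∈ Finset.Icc 1 (N j) then (1:ℝ) else 0)) := by
    intro n
    refine Summable.of_nonneg_of_le (fun j => ?_) (fun j => ?_) hs
    · have := ha j
      split_ifs <;> simp [this]
    · have := ha j
      split_ifs <;> simp [this]
  have hrow : ∀ j, HasSum (fun n => G (j, n)) (a j * ∑ n ∈ Finset.Icc 1 (N j), v n) := by
    intro j
    have h1 : a j * ∑ n ∈ Finset.Icc 1 (N j), v n = ∑ n ∈ Finset.Icc 1 (N j), G (j, n) := by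
      rw [Finset.mul_sum]
      refine Finset.sum_congr rfl fun n hn => ?_
      simp only [hG, if_pos hn]
      ring
    rw [h1]
    apply hasSum_sum_of_ne_finset_zero
    intro n hn
    simp only [hG, if_neg hn]
    simp
  have e1 : Summable G ↔ Summable (fun j => a j * ∑ n ∈ Finset.Icc 1 (N j), v n) := by
    rw [summable_prod_of_nonneg hG0]
    have : (fun j => ∑' n, G (j, n)) = (fun j => a j * ∑ n ∈ Finset.Icc 1 (N j), v n) :=
      funext fun j => (hrow j).tsum_eq
    rw [this]
    exact ⟨fun h => h.2, fun h => ⟨fun j => (hrow j).summable, h⟩⟩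
  have e2 : Summable (fun p : ℕ × ℕ => G p.swap) ↔ Summable (fun n => v n * ∑' j, a j * (if n ∈ Finset.Icc 1 (N j) then (1:ℝ) else 0)) := by
    rw [summable_prod_of_nonneg (fun p => hG0 p.swap)]
    have : (fun n => ∑' j, G ((n, j) : ℕ × ℕ).swap) = (fun n => v n * ∑' j, a j * (if n ∈ Finset.Icc 1 (N j) then (1:ℝ) else 0)) :=
      by
      funext n
      simp only [hG, Prod.swap_prod_mk, Prod.fst_swap, Prod.snd_swap]
      exact tsum_mul_left
    rw [this]
    exact ⟨fun h => h.2, fun h => ⟨fun n => (hcol n).mul_left (v n), h⟩⟩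
  rw [← e1, ← e2]
  exact (Equiv.summable_iff (f := G) (Equiv.prodComm ℕ ℕ)).symm

theorem stmt7 (ψ : ℝ → ℝ) (hψ : memD1 ψ) (A : Set ℕ) (hA : A.Infinite)
    (hdens : liminf (fun n : ℕ => Apsi ψ A n / ψ n) atTop = 0) :
    ∃ c : ℕ → ℝ,
      (∀ n : ℕ, 1 ≤ n → 0 < c n) ∧
      ¬ Summable c ∧
      (∀ n : ℕ, 1 ≤ n →
        c (n + 1) / deriv ψ ((n + 1 : ℕ) : ℝ) ≤ c n / deriv ψ (n : ℝ)) ∧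
      Summable (fun n => A.indicator c n) := by
  obtain ⟨⟨hmono, hpos, hdiff, htop⟩, hconc⟩ := hψ
  have hp : ∀ n : ℕ, 1 ≤ n → (0:ℝ) < n := fun n hn => by exact_mod_cast hn
  have hlow : ∀ n : ℕ, 1 ≤ n → ψ ((n + 1 : ℕ) : ℝ) - ψ n ≤ deriv ψ n := by
    intro n hn
    have h := hconc.slope_le_deriv (x := (n:ℝ)) (y := ((n+1:ℕ):ℝ)) (hp n hn)
      (hp (n+1) (by omega)) (by push_cast; linarith) (hdiff _ (hp n hn))
    rw [slope_def_field] at h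
    simpa using h
  have hup : ∀ n : ℕ, 1 ≤ n → deriv ψ ((n + 1 : ℕ) : ℝ) ≤ ψ ((n + 1 : ℕ) : ℝ) - ψ n := by
    intro n hn
    have h := hconc.deriv_le_slope (x := (n:ℝ)) (y := ((n+1:ℕ):ℝ)) (hp n hn)
      (hp (n+1) (by omega)) (by push_cast; linarith) (hdiff _ (hp _ (by omega)))
    rw [slope_def_field] at h
    simpa using h
  have hw : ∀ n : ℕ, 1 ≤ n → 0 < deriv ψ (n:ℝ) := by
    intro n hn
    have := hmono (hp n hn) (hp (n+1) (by omega)) (by push_cast; linarith)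
    linarith [hlow n hn]
  have hSlow : ∀ n : ℕ, 1 ≤ n → ψ n - ψ 1 ≤ Spsi ψ n := by
    intro n hn
    induction n, hn using Nat.le_induction with
    | base => simpa [Spsi] using (hw 1 le_rfl).le
    | succ n hn ih =>
      have h2 : ψ ((n+1:ℕ):ℝ) - ψ 1 ≤ Spsi ψ n := by
        clear ih
        induction n, hn using Nat.le_induction with
        | base => simpa [Spsi] using hlow 1 le_rfl
        | succ n hn ih =>
          have := hlow (n+1) (by omega)
          unfold Spsi at *
          rw [Finset.sum_Icc_succ_top (by omega)]
          linarith
      have := hw (n+1) (by omega)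
      unfold Spsi at *
      rw [Finset.sum_Icc_succ_top (by omega)]
      linarith
  have hSup : ∀ n : ℕ, 1 ≤ n → Spsi ψ n ≤ deriv ψ (1:ℝ) + ψ n := by
    intro n hn
    induction n, hn using Nat.le_induction with
    | base => simpa [Spsi] using (hpos 1 (by simp)).le
    | succ n hn ih =>
      have := hup n hn
      unfold Spsi at *
      rw [Finset.sum_Icc_succ_top (by omega)]
      linarith
  have hAS : ∀ n, Apsi ψ A n ≤ Spsi ψ n := by
    intro n
    refine Finset.sum_le_sum fun k hk => ?_
    have := hw k (Finset.mem_Icc.1 hk).1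
    by_cases h : k ∈ A <;> simp [h, this.le]
  have htopN : Tendsto (fun n : ℕ => ψ (n:ℝ)) atTop atTop := htop.comp tendsto_natCast_atTop_atTop
  have hbdd : IsBoundedUnder (· ≤ ·) atTop (fun n : ℕ => Apsi ψ A n / ψ n) := by
    refine isBoundedUnder_of_eventually_le (a := 2) ?_
    filter_upwards [eventually_ge_atTop 1, htopN.eventually_ge_atTop (deriv ψ (1:ℝ))] with n hn h
    rw [div_le_iff₀ (hpos _ (hp n hn))]
    linarith [hAS n, hSup n hn]
  have hfreq : ∀ ε : ℝ, 0 < ε → ∃ᶠ n : ℕ in atTop, Apsi ψ A n / ψ n < ε := by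
    intro ε hε hc
    have : ε ≤ liminf (fun n : ℕ => Apsi ψ A n / ψ n) atTop :=
      le_liminf_of_le hbdd.isCoboundedUnder_ge (hc.mono fun n hn => not_lt.1 hn)
    linarith
  have hex : ∀ j : ℕ, ∃ n : ℕ, j ≤ n ∧ 1 ≤ n ∧ (2:ℝ)^j ≤ ψ n ∧ 2 * ψ 1 ≤ ψ n ∧
      Apsi ψ A n / ψ n < (1/2:ℝ)^j := by
    intro j
    obtain ⟨n, h1, h2, h3, h4, h5⟩ := ((hfreq ((1/2:ℝ)^j) (by positivity)).and_eventually
      ((eventually_ge_atTop j).and ((eventually_ge_atTop 1).and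
      ((htopN.eventually_ge_atTop ((2:ℝ)^j)).and (htopN.eventually_ge_atTop (2 * ψ 1)))))).exists
    exact ⟨n, h2, h3, h4, h5, h1⟩
  choose N hNj hN1 hN2 hNψ hNA using hex
  set a : ℕ → ℝ := fun j => (ψ (N j))⁻¹ with ha
  have hψN : ∀ j, 0 < ψ (N j) := fun j => hpos _ (hp _ (hN1 j))
  have hapos : ∀ j, 0 < a j := fun j => inv_pos.2 (hψN j)
  have hasum : Summable a := by
    refine Summable.of_nonneg_of_le (fun j => (hapos j).le) (fun j => ?_) summable_geometric_two
    rw [one_div, inv_pow]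
    exact inv_anti₀ (by positivity) (hN2 j)
  have hind : ∀ n j : ℕ, 0 ≤ a j * (if n ∈ Finset.Icc 1 (N j) then (1:ℝ) else 0) := by
    intro n j
    have := (hapos j).le
    split_ifs <;> simp [this]
  have hcol : ∀ n, Summable (fun j => a j * (if n ∈ Finset.Icc 1 (N j) then (1:ℝ) else 0)) := by
    intro n
    refine Summable.of_nonneg_of_le (hind n) (fun j => ?_) hasum
    have := (hapos j).le
    split_ifs <;> simp [this]
  refine ⟨fun n => deriv ψ (n:ℝ) * ∑' j, a j * (if n ∈ Finset.Icc 1 (N j) then (1:ℝ) else 0),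
    ?_, ?_, ?_, ?_⟩
  · intro n hn
    refine mul_pos (hw n hn) ((hcol n).tsum_pos (hind n) n ?_)
    rw [if_pos (Finset.mem_Icc.2 ⟨hn, hNj n⟩), mul_one]
    exact hapos n
  · intro hsum
    have h := (swap_aux a (fun j => (hapos j).le) hasum N (fun n => deriv ψ (n:ℝ))
      (fun n hn => (hw n hn).le)).2 hsum
    have h0 := h.tendsto_atTop_zero
    have : (1/2:ℝ) ≤ 0 := by
      refine ge_of_tendsto' h0 fun j => ?_
      have h1 := hSlow (N j) (hN1 j)
      have h2 := hNψ j
      change 1/2 ≤ (ψ (N j))⁻¹ * Spsi ψ (N j)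
      rw [inv_mul_eq_div, le_div_iff₀ (hψN j)]
      linarith
    norm_num at this
  · intro n hn
    dsimp only
    rw [mul_div_cancel_left₀ _ (hw n hn).ne', mul_div_cancel_left₀ _ (hw (n+1) (by omega)).ne']
    refine (hcol (n+1)).tsum_le_tsum (fun j => ?_) (hcol n)
    refine mul_le_mul_of_nonneg_left ?_ (hapos j).le
    simp only [Finset.mem_Icc]
    split_ifs <;> first | (norm_num; done) | (exfalso; omega)
  · have h := (swap_aux a (fun j => (hapos j).le) hasum N
      (fun n => deriv ψ (n:ℝ) * A.indicator (fun _ => (1:ℝ)) n)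
      (fun n hn => mul_nonneg (hw n hn).le (Set.indicator_nonneg (fun _ _ => zero_le_one) _))).1 ?_
    · refine h.congr fun n => ?_
      by_cases hn : n ∈ A <;> simp [hn]
    · refine Summable.of_nonneg_of_le (fun j => mul_nonneg (hapos j).le
        (Finset.sum_nonneg fun n hn => mul_nonneg (hw n (Finset.mem_Icc.1 hn).1).le
          (Set.indicator_nonneg (fun _ _ => zero_le_one) _))) (fun j => ?_) summable_geometric_two
      have := (hNA j).le
      rw [← inv_mul_eq_div] at this
      exact this
end

section
/- Let {c_n} be a non-negative real sequence such that Σ_{n=1}^∞ c_n diverges. Then there exists a set A ⊆ ℕ such that Σ_{n=1}^∞ χ_A(n)·c_n diverges and, for every ψ ∈ 𝒟₂, lim_{n→∞} A_ψ(n)/(n·ψ'(n)) = 0. In particular, for every ψ ∈ 𝒟₂ satisfying liminf_{n→∞} ψ(n)/(n·ψ'(n)) > 0, this same set A has asymptotic ψ-density zero, i.e. lim_{n→∞} A_ψ(n)/ψ(n) = 0. -/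
open Filter

lemma aux_split (c : ℕ → ℝ) (B : Set ℕ) (hB : ¬ Summable (B.indicator c)) (m : ℕ) (hm : 0 < m) :
    ∃ r, ¬ Summable ((B ∩ {n | n % m = r}).indicator c) := by
  by_contra! h
  apply hB
  have h2 : Summable (fun n => ∑ r ∈ Finset.range m, (B ∩ {n | n % m = r}).indicator c n) :=
    summable_sum (fun r _ => h r)
  refine h2.congr (fun n => ?_)
  rw [Finset.sum_eq_single (n % m)]
  · by_cases hn : n ∈ B <;> simp [Set.indicator, hn]
  · intro r _ hr
    simp [Set.indicator, hr.symm]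
  · intro hh
    exact absurd (Finset.mem_range.2 (Nat.mod_lt _ hm)) hh

lemma aux_block (c : ℕ → ℝ) (hc : ∀ n : ℕ, 1 ≤ n → 0 ≤ c n) (B : Set ℕ)
    (hB : ¬ Summable (B.indicator c)) (N : ℕ) (hN : 1 ≤ N) :
    ∃ M, N < M ∧ 1 ≤ ∑ i ∈ Finset.Ico N M, B.indicator c i := by
  by_contra! h
  apply hB
  rw [← summable_nat_add_iff N]
  refine summable_of_sum_range_le (c := 1) (fun n => ?_) (fun n => ?_)
  · exact Set.indicator_apply_nonneg (fun _ => hc _ (by omega))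
  · rcases Nat.eq_zero_or_pos n with rfl | hn
    · simp
    · have := h (N + n) (by omega)
      rw [Finset.sum_Ico_eq_sum_range] at this
      simp only [Nat.add_sub_cancel_left] at this
      simp only [add_comm _ N]
      exact this.le

lemma aux_card (m r n : ℕ) (hm : 0 < m) :
    ((Finset.Icc 1 n).filter (fun j => j % m = r)).card ≤ n / m + 1 := by
  rw [← Finset.card_range (n / m + 1)]
  refine Finset.card_le_card_of_injOn (fun j => j / m) ?_ ?_
  · intro j hj
    simp only [Finset.coe_filter, Finset.mem_Icc, Set.mem_setOf_eq] at hj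
    simp only [Finset.coe_range, Set.mem_Iio]
    exact Nat.lt_succ_of_le (Nat.div_le_div_right hj.1.2)
  · intro a ha b hb hab
    simp only [Finset.coe_filter, Finset.mem_Icc, Set.mem_setOf_eq] at ha hb
    simp only at hab
    rw [← Nat.div_add_mod a m, ← Nat.div_add_mod b m, ha.2, hb.2, hab]

open Classical in
lemma aux_set (c : ℕ → ℝ) (hc : ∀ n : ℕ, 1 ≤ n → 0 ≤ c n) (hdiv : ¬ Summable c) :
    ∃ A : Set ℕ, ¬ Summable (A.indicator c) ∧
      Tendsto (fun n : ℕ => (((Finset.Icc 1 n).filter (fun j => j ∈ A)).card : ℝ) / n)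
        atTop (nhds 0) := by
  choose r hr using fun (B : {B : Set ℕ // ¬ Summable (B.indicator c)}) (m : ℕ) =>
    aux_split c B.1 B.2 (m + 1) (Nat.succ_pos m)
  let S : ℕ → {B : Set ℕ // ¬ Summable (B.indicator c)} := fun k =>
    Nat.rec ⟨Set.univ, by simpa using hdiv⟩ (fun k B => ⟨_, hr B k⟩) k
  have hS : ∀ k, (S (k+1)).1 = (S k).1 ∩ {n | n % (k+1) = r (S k) k} := fun k => rfl
  have hanti : Antitone (fun k => (S k).1) :=
    antitone_nat_of_succ_le (fun k => by rw [hS]; exact Set.inter_subset_left)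
  choose M hM1 hM2 using fun (k : ℕ) (N : {N : ℕ // 1 ≤ N}) =>
    aux_block c hc (S k).1 (S k).2 N.1 N.2
  let T : ℕ → {N : ℕ // 1 ≤ N} := fun k =>
    Nat.rec ⟨1, le_rfl⟩ (fun k N => ⟨M k N, N.2.trans (hM1 k N).le⟩) k
  have hT : ∀ k, (T (k+1)).1 = M k (T k) := fun k => rfl
  have hmono : StrictMono (fun k => (T k).1) :=
    strictMono_nat_of_lt_succ (fun k => by rw [hT]; exact hM1 k (T k))
  let A : Set ℕ := {n | ∃ k, n ∈ (S k).1 ∧ (T k).1 ≤ n ∧ n < (T (k+1)).1}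
  have hA : ∀ k n, n ∈ A → (T k).1 ≤ n → n ∈ (S k).1 := by
    rintro k n ⟨k', h1, h2, h3⟩ h4
    have : k < k' + 1 := hmono.lt_iff_lt.1 (h4.trans_lt h3)
    exact hanti (Nat.lt_succ_iff.1 this) h1
  refine ⟨A, fun hs => ?_, ?_⟩
  · have h1 := hs.hasSum.tendsto_sum_nat
    have h2 := h1.comp hmono.tendsto_atTop
    have h3 := (h2.comp (tendsto_add_atTop_nat 1)).sub h2
    rw [sub_self] at h3
    have h4 : (1:ℝ) ≤ 0 := by
      refine ge_of_tendsto' h3 (fun k => ?_)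
      simp only [Function.comp]
      rw [← Finset.sum_Ico_eq_sub _ (hmono (Nat.lt_succ_self k)).le]
      refine (hM2 k (T k)).trans (Finset.sum_le_sum (fun i hi => ?_))
      rw [← hT, Finset.mem_Ico] at hi
      by_cases hiS : i ∈ (S k).1
      · have : i ∈ A := ⟨k, hiS, hi.1, hi.2⟩
        rw [Set.indicator_of_mem hiS, Set.indicator_of_mem this]
      · rw [Set.indicator_of_notMem hiS]
        exact Set.indicator_apply_nonneg (fun _ => hc _ ((T k).2.trans hi.1))
    linarith
  · have key : ∀ k n : ℕ, ((Finset.Icc 1 n).filter (fun j => j ∈ A)).card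
        ≤ (T (k+1)).1 + (n / (k+1) + 1) := by
      intro k n
      have hsub : (Finset.Icc 1 n).filter (fun j => j ∈ A) ⊆ Finset.range (T (k+1)).1 ∪
          (Finset.Icc 1 n).filter (fun j => j % (k+1) = r (S k) k) := by
        intro j hj
        simp only [Finset.mem_filter, Finset.mem_union, Finset.mem_range] at hj ⊢
        by_cases hjT : j < (T (k+1)).1
        · exact Or.inl hjT
        · have := hA (k+1) j hj.2 (not_lt.1 hjT)
          rw [hS] at this
          exact Or.inr ⟨hj.1, this.2⟩
      refine (Finset.card_le_card hsub).trans ((Finset.card_union_le _ _).trans ?_)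
      rw [Finset.card_range]
      exact Nat.add_le_add_left (aux_card _ _ _ (Nat.succ_pos k)) _
    rw [Metric.tendsto_atTop]
    intro ε hε
    obtain ⟨k, hk⟩ := exists_nat_one_div_lt (half_pos hε)
    obtain ⟨N, hN⟩ := exists_nat_gt ((((T (k+1)).1 : ℝ) + 1) / (ε / 2))
    refine ⟨N + 1, fun n hn => ?_⟩
    have hn' : (N : ℝ) + 1 ≤ n := by exact_mod_cast hn
    have hn0 : (0:ℝ) < n := by have : (0:ℝ) ≤ N := N.cast_nonneg
                               linarith
    rw [Real.dist_eq, sub_zero, abs_of_nonneg (by positivity), div_lt_iff₀ hn0]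
    have h1 : (((Finset.Icc 1 n).filter (fun j => j ∈ A)).card : ℝ)
        ≤ (T (k+1)).1 + (((n / (k+1) : ℕ) : ℝ) + 1) := by exact_mod_cast key k n
    have h2 : ((n / (k+1) : ℕ) : ℝ) ≤ n * (1 / ((k:ℝ)+1)) := by
      have := @Nat.cast_div_le ℝ _ _ _ n (k+1)
      push_cast at this
      rwa [mul_one_div]
    have h3 : n * (1 / ((k:ℝ)+1)) ≤ n * (ε / 2) := by gcongr
    rw [div_lt_iff₀ (by positivity)] at hN
    have h4 : (N:ℝ) * (ε/2) ≤ n * (ε/2) := by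
      gcongr; linarith
    linarith

lemma aux_deriv_nonneg {ψ : ℝ → ℝ} (h : memD2 ψ) {x : ℝ} (hx : 0 < x) : 0 ≤ deriv ψ x := by
  rw [← derivWithin_of_mem_nhds (Ioi_mem_nhds hx)]
  exact h.1.1.monotoneOn.derivWithin_nonneg

lemma aux_deriv_mono {ψ : ℝ → ℝ} (h : memD2 ψ) : MonotoneOn (deriv ψ) (Set.Ioi 0) :=
  h.2.1.monotoneOn_deriv h.1.2.2.1

lemma aux_Apsi_nonneg {ψ : ℝ → ℝ} (h : memD2 ψ) (A : Set ℕ) (n : ℕ) : 0 ≤ Apsi ψ A n := by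
  refine Finset.sum_nonneg (fun k hk => mul_nonneg (aux_deriv_nonneg h ?_) ?_)
  · have := (Finset.mem_Icc.1 hk).1
    exact_mod_cast this
  · exact Set.indicator_apply_nonneg (fun _ => zero_le_one)

open Classical in
lemma aux_Apsi_le {ψ : ℝ → ℝ} (h : memD2 ψ) (A : Set ℕ) (n : ℕ) :
    Apsi ψ A n ≤ deriv ψ n * ((Finset.Icc 1 n).filter (fun j => j ∈ A)).card := by
  have : (((Finset.Icc 1 n).filter (fun j => j ∈ A)).card : ℝ) =
      ∑ k ∈ Finset.Icc 1 n, A.indicator (fun _ => (1 : ℝ)) k := by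
    simp [Set.indicator]
  rw [this, Finset.mul_sum]
  refine Finset.sum_le_sum (fun k hk => ?_)
  obtain ⟨h1, h2⟩ := Finset.mem_Icc.1 hk
  refine mul_le_mul_of_nonneg_right (aux_deriv_mono h ?_ ?_ (by exact_mod_cast h2))
    (Set.indicator_apply_nonneg (fun _ => zero_le_one))
  · exact Set.mem_Ioi.2 (by exact_mod_cast h1)
  · exact Set.mem_Ioi.2 (by exact_mod_cast h1.trans h2)

theorem stmt12 (c : ℕ → ℝ) (hc_nonneg : ∀ n : ℕ, 1 ≤ n → 0 ≤ c n)
    (hdiv : ¬ Summable c) :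
    ∃ A : Set ℕ,
      ¬ Summable (fun n => A.indicator c n) ∧
      (∀ ψ : ℝ → ℝ, memD2 ψ →
        Tendsto (fun n : ℕ => Apsi ψ A n / (n * deriv ψ n)) atTop (nhds 0)) ∧
      (∀ ψ : ℝ → ℝ, memD2 ψ →
        (∃ δ > (0:ℝ), ∀ᶠ n : ℕ in atTop, δ ≤ ψ n / (n * deriv ψ n)) →
        Tendsto (fun n : ℕ => Apsi ψ A n / ψ n) atTop (nhds 0)) := by
  classical
  obtain ⟨A, hA1, hA2⟩ := aux_set c hc_nonneg hdiv
  have main : ∀ ψ : ℝ → ℝ, memD2 ψ →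
        Tendsto (fun n : ℕ => Apsi ψ A n / (n * deriv ψ n)) atTop (nhds 0) := by
    intro ψ h
    refine tendsto_of_tendsto_of_tendsto_of_le_of_le' tendsto_const_nhds hA2 ?_ ?_
    · filter_upwards [eventually_gt_atTop 0] with n hn
      have hn' : (0:ℝ) < n := by exact_mod_cast hn
      exact div_nonneg (aux_Apsi_nonneg h A n) (mul_nonneg hn'.le (aux_deriv_nonneg h hn'))
    · filter_upwards [eventually_gt_atTop 0] with n hn
      have hn' : (0:ℝ) < n := by exact_mod_cast hn
      rcases (aux_deriv_nonneg h hn').eq_or_lt with h0 | h0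
      · rw [← h0, mul_zero, div_zero]
        positivity
      · rw [div_le_div_iff₀ (by positivity) hn']
        have := mul_le_mul_of_nonneg_right (aux_Apsi_le h A n) hn'.le
        linarith
  refine ⟨A, hA1, main, fun ψ h ⟨δ, hδ, hev⟩ => ?_⟩
  have hm := (main ψ h).const_mul (1 / δ)
  rw [mul_zero] at hm
  refine tendsto_of_tendsto_of_tendsto_of_le_of_le' tendsto_const_nhds hm ?_ ?_
  · filter_upwards [eventually_gt_atTop 0] with n hn
    have hn' : (0:ℝ) < n := by exact_mod_cast hn
    exact div_nonneg (aux_Apsi_nonneg h A n) (h.1.2.1 n hn').le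
  · filter_upwards [eventually_gt_atTop 0, hev] with n hn hd
    have hn' : (0:ℝ) < n := by exact_mod_cast hn
    have hp := h.1.2.1 n hn'
    rcases (aux_deriv_nonneg h hn').eq_or_lt with h0 | h0
    · rw [← h0, mul_zero, div_zero] at hd
      linarith
    · have hq : 0 < (n:ℝ) * deriv ψ n := by positivity
      rw [le_div_iff₀ hq] at hd
      rw [div_mul_div_comm, one_mul]
      exact div_le_div_of_nonneg_left (aux_Apsi_nonneg h A n) (by positivity) hd
end

section
/- If ψ ∈ 𝒟 is log-concave (i.e., ψ'/ψ is non-increasing), then liminf_{n→∞, n∈ℕ} ψ(n)/(n·ψ'(n)) > 0 holds if and only if liminf_{x→∞, x real} ψ(x)/(x·ψ'(x)) > 0. -/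
open Filter

/-- for log-concave ψ ∈ 𝒟, liminf over ℕ of ψ(n)/(n ψ'(n)) is positive
iff liminf over ℝ of ψ(x)/(x ψ'(x)) is positive. -/
theorem stmt13 (ψ : ℝ → ℝ) (hψ : memD ψ)
    (hlc : AntitoneOn (fun x => deriv ψ x / ψ x) (Set.Ioi 0)) :
    (∃ δ > (0:ℝ), ∀ᶠ n : ℕ in atTop, δ ≤ ψ n / (n * deriv ψ n)) ↔
      (∃ δ > (0:ℝ), ∀ᶠ x : ℝ in atTop, δ ≤ ψ x / (x * deriv ψ x)) := by
  obtain ⟨hmono, hpos, hdiff, -⟩ := hψ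
  have hd : ∀ x : ℝ, 0 < x → 0 < deriv ψ x := by
    intro x hx
    by_contra hcon
    have hle : deriv ψ x ≤ 0 := not_lt.mp hcon
    have hanti : AntitoneOn ψ (Set.Ici x) := by
      apply antitoneOn_of_deriv_nonpos (convex_Ici x)
      · intro y hy
        exact (hdiff y (lt_of_lt_of_le hx hy)).continuousAt.continuousWithinAt
      · intro y hy
        rw [interior_Ici] at hy
        exact (hdiff y (lt_trans hx hy)).differentiableWithinAt
      · intro y hy
        rw [interior_Ici] at hy
        have hy0 : 0 < y := lt_trans hx hy
        have h1 : deriv ψ y / ψ y ≤ deriv ψ x / ψ x := hlc hx hy0 (le_of_lt hy)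
        have h2 : deriv ψ x / ψ x ≤ 0 := div_nonpos_of_nonpos_of_nonneg hle (hpos x hx).le
        by_contra h3
        have h4 : 0 < deriv ψ y / ψ y := div_pos (not_le.mp h3) (hpos y hy0)
        linarith
    have hx1 : (0:ℝ) < x + 1 := by linarith
    have h5 : ψ x < ψ (x + 1) := hmono hx hx1 (by linarith)
    have h6 : ψ (x + 1) ≤ ψ x :=
      hanti (Set.mem_Ici.mpr le_rfl) (Set.mem_Ici.mpr (by linarith)) (by linarith)
    linarith
  constructor
  · rintro ⟨δ, hδ, h⟩
    refine ⟨δ / 2, by positivity, ?_⟩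
    have h' := (tendsto_nat_floor_atTop (α := ℝ)).eventually h
    filter_upwards [h', eventually_ge_atTop (1:ℝ)] with x hx hx1
    have hx0 : 0 < x := by linarith
    have hn1 : (1:ℝ) ≤ (⌊x⌋₊ : ℝ) := by
      exact_mod_cast (Nat.one_le_floor_iff x).mpr hx1
    have hnx : (⌊x⌋₊ : ℝ) ≤ x := Nat.floor_le hx0.le
    have hxn : x < (⌊x⌋₊ : ℝ) + 1 := Nat.lt_floor_add_one x
    generalize (⌊x⌋₊ : ℝ) = n at *
    have hn0 : 0 < n := by linarith
    have hg : deriv ψ x / ψ x ≤ deriv ψ n / ψ n := hlc hn0 hx0 hnx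
    have a1 := hd x hx0
    have a2 := hd n hn0
    have a3 := hpos x hx0
    have a4 := hpos n hn0
    rw [le_div_iff₀ (by positivity)] at hx ⊢
    have hb : δ * (n * (deriv ψ n / ψ n)) ≤ 1 := by
      have : δ * (n * (deriv ψ n / ψ n)) = δ * (n * deriv ψ n) / ψ n := by ring
      rw [this, div_le_one a4]
      exact hx
    have hc : δ / 2 * (x * (deriv ψ x / ψ x)) ≤ 1 := by
      calc δ / 2 * (x * (deriv ψ x / ψ x)) ≤ δ / 2 * ((2 * n) * (deriv ψ n / ψ n)) := by
            gcongr
            linarith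
        _ = δ * (n * (deriv ψ n / ψ n)) := by ring
        _ ≤ 1 := hb
    have : δ / 2 * (x * (deriv ψ x / ψ x)) = δ / 2 * (x * deriv ψ x) / ψ x := by ring
    rw [this, div_le_one a3] at hc
    exact hc
  · rintro ⟨δ, hδ, h⟩
    exact ⟨δ, hδ, (tendsto_natCast_atTop_atTop (R := ℝ)).eventually h⟩
end

section
/- Let ψ ∈ 𝒟 satisfy liminf_{x→∞} ψ(x)/(x·ψ'(x)) > 0. Then ψ has finite order of growth, i.e. limsup_{x→∞} (log ψ(x))/(log x) < ∞. If in addition ψ is log-concave (i.e., ψ'/ψ is non-increasing), then there exist constants C ≥ 2 and R > 0 with ψ(2x) ≤ C·ψ(x) for all x ≥ R, and moreover limsup_{x→∞} x·log(ψ(x+1)/ψ(x)) < ∞. -/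
open Filter

theorem key (ψ : ℝ → ℝ) (hpos : ∀ x ∈ Set.Ioi (0:ℝ), 0 < ψ x)
    (hdiff : ∀ x ∈ Set.Ioi (0:ℝ), DifferentiableAt ℝ ψ x) (δ : ℝ) (hδ : 0 < δ)
    (hev : ∀ᶠ x : ℝ in atTop, δ ≤ ψ x / (x * deriv ψ x)) :
    ∃ R : ℝ, 1 ≤ R ∧ ∀ x y : ℝ, R ≤ x → x ≤ y →
      Real.log (ψ y) - Real.log (ψ x) ≤ δ⁻¹ * (Real.log y - Real.log x) := by
  obtain ⟨R0, hR0⟩ := eventually_atTop.mp hev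
  refine ⟨max R0 1, le_max_right _ _, ?_⟩
  have hD : ∀ x ∈ Set.Ici (max R0 1), HasDerivAt
      (fun t => Real.log (ψ t) - δ⁻¹ * Real.log t) (deriv ψ x / ψ x - δ⁻¹ * x⁻¹) x := by
    intro x hx
    have hx0 : 0 < x := lt_of_lt_of_le one_pos ((le_max_right _ _).trans hx)
    exact ((hdiff x hx0).hasDerivAt.log (hpos x hx0).ne').sub
      ((Real.hasDerivAt_log hx0.ne').const_mul _)
  have hanti : AntitoneOn (fun t => Real.log (ψ t) - δ⁻¹ * Real.log t)
      (Set.Ici (max R0 1)) := by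
    apply antitoneOn_of_deriv_nonpos (convex_Ici _)
    · exact fun x hx => (hD x hx).continuousAt.continuousWithinAt
    · exact fun x hx => (hD x (interior_subset hx)).differentiableAt.differentiableWithinAt
    · intro x hx
      have hx' := interior_subset hx
      rw [(hD x hx').deriv]
      have hx0 : 0 < x := lt_of_lt_of_le one_pos ((le_max_right _ _).trans hx')
      have h := hR0 x ((le_max_left _ _).trans hx')
      have hp := hpos x hx0
      have hq : 0 < ψ x / (x * deriv ψ x) := lt_of_lt_of_le hδ h
      have hxd : 0 < x * deriv ψ x := (div_pos_iff_of_pos_left hp).mp hq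
      rw [le_div_iff₀ hxd] at h
      rw [sub_nonpos, ← mul_inv, div_le_iff₀ hp, inv_mul_eq_div, le_div_iff₀ (by positivity)]
      linarith
  intro x y hx hxy
  have := hanti hx (Set.mem_Ici.mpr (hx.trans hxy)) hxy
  simp only at this
  linarith

/-- if ψ ∈ 𝒟 satisfies liminf_{x→∞} ψ(x)/(x ψ'(x)) > 0 then ψ has
finite order of growth; if in addition ψ is log-concave then ψ satisfies a doubling
condition ψ(2x) ≤ C ψ(x) and limsup_{x→∞} x log(ψ(x+1)/ψ(x)) < ∞. -/
theorem stmt15 (ψ : ℝ → ℝ) (hψ : memD ψ)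
    (hliminf : ∃ δ > (0:ℝ), ∀ᶠ x : ℝ in atTop, δ ≤ ψ x / (x * deriv ψ x)) :
    (∃ M : ℝ, ∀ᶠ x : ℝ in atTop, Real.log (ψ x) / Real.log x ≤ M) ∧
    (AntitoneOn (fun x => deriv ψ x / ψ x) (Set.Ioi 0) →
      (∃ C : ℝ, 2 ≤ C ∧ ∃ R : ℝ, 0 < R ∧ ∀ x : ℝ, R ≤ x → ψ (2 * x) ≤ C * ψ x) ∧
      (∃ M : ℝ, ∀ᶠ x : ℝ in atTop, x * Real.log (ψ (x + 1) / ψ x) ≤ M)) := by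
  obtain ⟨hmono, hpos, hdiff, -⟩ := hψ
  obtain ⟨δ, hδ, hev⟩ := hliminf
  obtain ⟨R, hR1, hR⟩ := key ψ hpos hdiff δ hδ hev
  have hK : 0 < δ⁻¹ := inv_pos.mpr hδ
  refine ⟨⟨|Real.log (ψ R)| + δ⁻¹, ?_⟩, fun _ => ⟨?_, δ⁻¹, ?_⟩⟩
  · filter_upwards [eventually_ge_atTop R, eventually_ge_atTop (Real.exp 1)] with x hx hxe
    have h1 : 1 ≤ Real.log x := by
      rw [Real.le_log_iff_exp_le (by linarith)]
      exact hxe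
    rw [div_le_iff₀ (by linarith)]
    have h2 := hR R x le_rfl hx
    have h3 : 0 ≤ Real.log R := Real.log_nonneg hR1
    have h4 := le_abs_self (Real.log (ψ R))
    have h5 := abs_nonneg (Real.log (ψ R))
    nlinarith [mul_nonneg hK.le h3]
  · refine ⟨max 2 (Real.exp (δ⁻¹ * Real.log 2)), le_max_left _ _, R, by linarith, fun x hx => ?_⟩
    have hx0 : 0 < x := by linarith
    have h2 := hR x (2 * x) hx (by linarith)
    rw [Real.log_mul (by norm_num) hx0.ne', add_sub_cancel_right] at h2
    have hp := hpos x hx0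
    have hp2 := hpos (2 * x) (by simp; linarith)
    calc ψ (2 * x) = Real.exp (Real.log (ψ (2 * x))) := (Real.exp_log hp2).symm
      _ ≤ Real.exp (δ⁻¹ * Real.log 2 + Real.log (ψ x)) := Real.exp_le_exp.mpr (by linarith)
      _ = Real.exp (δ⁻¹ * Real.log 2) * ψ x := by rw [Real.exp_add, Real.exp_log hp]
      _ ≤ _ := mul_le_mul_of_nonneg_right (le_max_right _ _) hp.le
  · filter_upwards [eventually_ge_atTop R] with x hx
    have hx0 : 0 < x := by linarith
    have h2 := hR x (x + 1) hx (by linarith)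
    have hp := hpos x hx0
    have hp2 := hpos (x + 1) (by simp; linarith)
    rw [Real.log_div hp2.ne' hp.ne']
    have h3 : Real.log (x + 1) - Real.log x ≤ 1 / x := by
      rw [← Real.log_div (by linarith) hx0.ne']
      have := Real.log_le_sub_one_of_pos (x := (x + 1) / x) (by positivity)
      have e : (x + 1) / x - 1 = 1 / x := by field_simp; ring
      linarith
    calc x * (Real.log (ψ (x + 1)) - Real.log (ψ x))
        ≤ x * (δ⁻¹ * (1 / x)) :=
          mul_le_mul_of_nonneg_left (h2.trans (mul_le_mul_of_nonneg_left h3 hK.le)) hx0.le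
      _ = δ⁻¹ := by field_simp
end

section
/- Let ψ ∈ 𝒟, and let {c_n} be a positive real sequence such that {c_n/ψ'(n)} is non-increasing and tends to zero. Let {m_n} be a real sequence with m_n ∈ {−1, 0, 1}, and set A = {n ∈ ℕ : m_n = 1} and B = {n ∈ ℕ : m_n = −1}. If the sub-signed series Σ_{n=1}^∞ m_n·c_n converges, then ((A_ψ(n) − B_ψ(n))/ψ'(n))·c_n → 0 as n → ∞. -/
open Filter

theorem kronecker_aux (b x : ℕ → ℝ) (hb : Monotone b) (hbt : Tendsto b atTop atTop) (L : ℝ)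
    (hx : Tendsto (fun N => ∑ k ∈ Finset.range N, x k) atTop (nhds L)) :
    Tendsto (fun n => (∑ k ∈ Finset.range (n + 1), b k * x k) / b n) atTop (nhds 0) := by
  set T : ℕ → ℝ := fun n => ∑ k ∈ Finset.range n, x k - L with hT
  have hT0 : Tendsto T atTop (nhds 0) := by
    simpa [hT] using hx.sub_const L
  have hT1 : Tendsto (fun n => T (n + 1)) atTop (nhds 0) := (tendsto_add_atTop_iff_nat 1).2 hT0
  have hsum : ∀ n, ∑ k ∈ Finset.range n, (b (k + 1) - b k) = b n - b 0 := fun n =>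
    Finset.sum_range_sub b n
  have key : ∀ n, ∑ k ∈ Finset.range (n + 1), b k * x k
      = b n * T (n + 1) - b 0 * T 0 - ∑ k ∈ Finset.range n, (b (k + 1) - b k) * T (k + 1) := by
    intro n
    induction n with
    | zero => simp [hT]; ring
    | succ n ih =>
      rw [Finset.sum_range_succ, ih, Finset.sum_range_succ _ n]
      have : T (n + 1 + 1) = T (n + 1) + x (n + 1) := by
        simp only [hT]; rw [Finset.sum_range_succ _ (n + 1)]; ring
      rw [this]; ring
  have hlo : (fun n => ∑ k ∈ Finset.range n, (b (k + 1) - b k) * T (k + 1)) =o[atTop]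
      (fun n => ∑ k ∈ Finset.range n, (b (k + 1) - b k)) := by
    apply Asymptotics.IsLittleO.sum_range
    · have h := (Asymptotics.isBigO_refl (fun k => b (k + 1) - b k) atTop).mul_isLittleO
        ((Asymptotics.isLittleO_one_iff ℝ).2 hT1)
      simpa using h
    · intro k; exact sub_nonneg.2 (hb (Nat.le_succ k))
    · simp only [hsum]; exact tendsto_atTop_add_const_right _ _ hbt
  have h1 : Tendsto (fun n => b 0 * T 0 / b n) atTop (nhds 0) := hbt.const_div_atTop _
  have hO : (fun n => ∑ k ∈ Finset.range n, (b (k + 1) - b k)) =O[atTop] b := by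
    simp only [hsum]
    refine (Asymptotics.isBigO_refl b atTop).sub ?_
    refine ((Asymptotics.isLittleO_const_left).2 (Or.inr ?_)).isBigO
    exact tendsto_norm_atTop_atTop.comp hbt
  have h2 := (hlo.trans_isBigO hO).tendsto_div_nhds_zero
  have h3 := (hT1.sub h1).sub h2
  simp only [sub_zero] at h3
  refine h3.congr' ?_
  filter_upwards [hbt.eventually_gt_atTop 0] with n hn
  rw [key]; field_simp

/-- ψ ∈ 𝒟, c positive with c_n/ψ'(n) non-increasing → 0, m_n ∈ {−1,0,1},
A = {n : m_n = 1}, B = {n : m_n = −1}; if Σ m_n c_n converges then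
((A_ψ(n) − B_ψ(n))/ψ'(n))·c_n → 0. -/
theorem stmt16 (ψ : ℝ → ℝ) (hψ : memD ψ) (c : ℕ → ℝ)
    (hc_pos : ∀ n : ℕ, 1 ≤ n → 0 < c n)
    (hmono : ∀ n : ℕ, 1 ≤ n →
      c (n + 1) / deriv ψ ((n + 1 : ℕ) : ℝ) ≤ c n / deriv ψ (n : ℝ))
    (hzero : Tendsto (fun n : ℕ => c n / deriv ψ (n : ℝ)) atTop (nhds 0))
    (m : ℕ → ℝ) (hm : ∀ n : ℕ, m n = -1 ∨ m n = 0 ∨ m n = 1)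
    (hconv : ∃ L : ℝ,
      Tendsto (fun N : ℕ => ∑ n ∈ Finset.Icc 1 N, m n * c n) atTop (nhds L)) :
    Tendsto (fun n : ℕ =>
        (Apsi ψ {k | m k = 1} n - Apsi ψ {k | m k = -1} n) / deriv ψ (n : ℝ) * c n)
      atTop (nhds 0) := by
  have hd : ∀ n : ℕ, 1 ≤ n → 0 ≤ deriv ψ (n : ℝ) := by
    intro n hn
    have hn' : (0 : ℝ) < n := by exact_mod_cast hn
    have h := hψ.1.monotoneOn.derivWithin_nonneg (x := (n : ℝ))
    rwa [derivWithin_of_isOpen isOpen_Ioi hn'] at h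
  have hanti : Antitone (fun n : ℕ => c (n + 1) / deriv ψ ((n + 1 : ℕ) : ℝ)) :=
    antitone_nat_of_succ_le (fun n => hmono (n + 1) (by omega))
  by_cases hz : ∃ N : ℕ, deriv ψ ((N + 1 : ℕ) : ℝ) = 0
  · obtain ⟨N, hN⟩ := hz
    refine tendsto_const_nhds.congr' ?_
    filter_upwards [eventually_ge_atTop (N + 1)] with n hn
    obtain ⟨k, rfl⟩ : ∃ k, n = k + 1 := ⟨n - 1, by omega⟩
    have h := hanti (show N ≤ k by omega)
    simp only [hN, div_zero] at h
    have h0 : deriv ψ ((k + 1 : ℕ) : ℝ) = 0 := by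
      by_contra hne
      have := lt_of_le_of_ne (hd (k + 1) (by omega)) (Ne.symm hne)
      exact absurd h (not_le.2 (div_pos (hc_pos (k + 1) (by omega)) this))
    rw [h0]; simp
  · push Not at hz
    have hpos : ∀ n : ℕ, 0 < deriv ψ ((n + 1 : ℕ) : ℝ) := fun n =>
      lt_of_le_of_ne (hd (n + 1) (by omega)) (Ne.symm (hz n))
    have hw : ∀ n : ℕ, 0 < c (n + 1) / deriv ψ ((n + 1 : ℕ) : ℝ) := fun n =>
      div_pos (hc_pos (n + 1) (by omega)) (hpos n)
    obtain ⟨L, hL⟩ := hconv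
    have hicc : ∀ (f : ℕ → ℝ) (N : ℕ),
        ∑ k ∈ Finset.Icc 1 N, f k = ∑ k ∈ Finset.range N, f (k + 1) := by
      intro f N
      induction N with
      | zero => simp
      | succ N ih => rw [Finset.sum_Icc_succ_top (by omega), ih, Finset.sum_range_succ]
    simp only [hicc] at hL
    have hzero' : Tendsto (fun n : ℕ => c (n + 1) / deriv ψ ((n + 1 : ℕ) : ℝ)) atTop (nhds 0) :=
      (tendsto_add_atTop_iff_nat (f := fun n : ℕ => c n / deriv ψ (n : ℝ)) 1).2 hzero
    have K := kronecker_aux (fun n => (c (n + 1) / deriv ψ ((n + 1 : ℕ) : ℝ))⁻¹)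
      (fun n => m (n + 1) * c (n + 1))
      (fun i j hij => inv_anti₀ (hw j) (hanti hij))
      (tendsto_inv_nhdsGT_zero.comp
        (tendsto_nhdsWithin_iff.2 ⟨hzero', Eventually.of_forall hw⟩)) L hL
    rw [← tendsto_add_atTop_iff_nat 1]
    refine K.congr ?_
    intro n
    have hA : Apsi ψ {k | m k = 1} (n + 1) - Apsi ψ {k | m k = -1} (n + 1)
        = ∑ k ∈ Finset.range (n + 1), (c (k + 1) / deriv ψ ((k + 1 : ℕ) : ℝ))⁻¹ *
          (m (k + 1) * c (k + 1)) := by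
      unfold Apsi
      rw [← Finset.sum_sub_distrib, hicc]
      refine Finset.sum_congr rfl fun k _ => ?_
      have h1 := (hpos k).ne'
      have h2 := (hc_pos (k + 1) (by omega)).ne'
      have h3 : (c (k + 1) / deriv ψ ((k + 1 : ℕ) : ℝ))⁻¹ * (m (k + 1) * c (k + 1))
          = deriv ψ ((k + 1 : ℕ) : ℝ) * m (k + 1) := by
        field_simp
      rw [h3, ← mul_sub]
      congr 1
      rcases hm (k + 1) with h | h | h <;> simp [Set.indicator, h] <;> norm_num
    rw [hA, div_inv_eq_mul]
    ring
end

section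
/- If ψ ∈ 𝒟 is log-concave (i.e., ψ'/ψ is non-increasing), then inf_{x>1} (ψ(x) − ψ(x−1))/ψ'(x) > 0. -/
open Filter

/-- if ψ ∈ 𝒟 is log-concave then inf_{x>1} (ψ(x) − ψ(x−1))/ψ'(x) > 0. -/
theorem stmt19 (ψ : ℝ → ℝ) (hψ : memD ψ)
    (hlc : AntitoneOn (fun x => deriv ψ x / ψ x) (Set.Ioi 0)) :
    ∃ δ > (0:ℝ), ∀ x : ℝ, 1 < x → δ ≤ (ψ x - ψ (x - 1)) / deriv ψ x := by
  obtain ⟨hm, hp, hd, -⟩ := hψ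
  have mvt : ∀ a : ℝ, 0 < a → ∃ c ∈ Set.Ioo a (a + 1), deriv ψ c = ψ (a + 1) - ψ a := by
    intro a ha
    obtain ⟨c, hc, h⟩ := exists_deriv_eq_slope ψ (show a < a + 1 by linarith)
      (fun y hy => (hd y (lt_of_lt_of_le ha hy.1)).continuousAt.continuousWithinAt)
      (fun y hy => (hd y (lt_trans ha hy.1)).differentiableWithinAt)
    refine ⟨c, hc, ?_⟩
    rw [h]
    simp
  have hpos : ∀ x : ℝ, 0 < x → 0 < deriv ψ x / ψ x := by
    intro x hx
    obtain ⟨c, hc, h⟩ := mvt x hx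
    have hc0 : 0 < c := lt_trans hx hc.1
    have h1 : ψ x < ψ (x + 1) :=
      hm (show (0:ℝ) < x from hx) (show (0:ℝ) < x + 1 by linarith) (by linarith)
    have h2 : 0 < deriv ψ c / ψ c := div_pos (by linarith) (hp c hc0)
    exact lt_of_lt_of_le h2 (hlc hx hc0 hc.1.le)
  have hC := hpos 1 one_pos
  refine ⟨1 / (1 + deriv ψ 1 / ψ 1), by positivity, ?_⟩
  intro x hx
  have hx0 : 0 < x := by linarith
  have hx1 : 0 < x - 1 := by linarith
  have hcpos := hpos x hx0
  have hcC : deriv ψ x / ψ x ≤ deriv ψ 1 / ψ 1 := hlc (show (0:ℝ) < 1 from one_pos) hx0 hx.le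
  obtain ⟨ξ, hξ, h⟩ := mvt (x - 1) hx1
  rw [sub_add_cancel] at h hξ
  have hξ0 : 0 < ξ := lt_trans hx1 hξ.1
  have h1 : deriv ψ x / ψ x ≤ deriv ψ ξ / ψ ξ := hlc hξ0 hx0 hξ.2.le
  have h2 : ψ (x - 1) < ψ ξ := hm hx1 hξ0 hξ.1
  have hψx := hp x hx0
  have hd1 : deriv ψ x = deriv ψ x / ψ x * ψ x := by field_simp
  rw [le_div_iff₀ (hp ξ hξ0), h] at h1
  generalize deriv ψ x / ψ x = c at *
  generalize deriv ψ 1 / ψ 1 = C at *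
  have h3 : c * ψ (x - 1) ≤ ψ x - ψ (x - 1) := by nlinarith
  have h4 : 0 < ψ x - ψ (x - 1) := by nlinarith [hp (x - 1) hx1]
  rw [hd1, div_le_div_iff₀ (by linarith) (by positivity)]
  nlinarith
end
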